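/- arXiv:1410.8212 — 3 statements merged into one kernel-verified Lean document; each statement's English description precedes it below -/
import Mathlib

section
/- The algebra H_{q,κ} = (T(V)⋊G)/(v_i v_j − q_{ij} v_j v_i − κ(v_i,v_j) : 1 ≤ i,j ≤ n) is a quantum Drinfeld orbifold algebra (i.e., a PBW deformation of S_q(V)⋊G) if and only if the following four conditions hold. (1) For all g,h ∈ G and 1 ≤ i < j ≤ n: κ_g^C(v_j,v_i) = Σ_{k<l} det_{ijkl}(h) κ_{hgh⁻¹}^C(v_l,v_k) and ʰ(κ_g^L(v_j,v_i)) = Σ_{k<l} det_{ijkl}(h) κ_{hgh⁻¹}^L(v_l,v_k). (2) For all distinct i,j,k and all g ∈ G, in S_q(V): q_{ji}q_{ki} v_i κ_g^L(v_k,v_j) − κ_g^L(v_k,v_j) ᵍv_i − q_{kj} v_j κ_g^L(v_k,v_i) + q_{ji} κ_g^L(v_k,v_i) ᵍv_j + v_k κ_g^L(v_j,v_i) − q_{ki}q_{kj} κ_g^L(v_j,v_i) ᵍv_k = 0. (3) For all distinct i,j,k and all g ∈ G: Σ_{h∈G} ( q_{ij}q_{ik} κ_{gh⁻¹}^L(κ_h^L(v_j,v_k),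 ʰv_i) − κ_{gh⁻¹}^L(v_i, κ_h^L(v_j,v_k)) + q_{ik}q_{jk} κ_{gh⁻¹}^L(κ_h^L(v_k,v_i), ʰv_j) − q_{ij}q_{ik} κ_{gh⁻¹}^L(v_j, κ_h^L(v_k,v_i)) + κ_{gh⁻¹}^L(κ_h^L(v_i,v_j), ʰv_k) − q_{ik}q_{jk} κ_{gh⁻¹}^L(v_k, κ_h^L(v_i,v_j)) ) = 2( κ_g^C(v_j,v_k)(v_i − q_{ij}q_{ik} ᵍv_i) + κ_g^C(v_k,v_i)(q_{ij}q_{ik} v_j − q_{ik}q_{jk} ᵍv_j) + κ_g^C(v_i,v_j)(q_{ik}q_{jk} v_k − ᵍv_k) ). (4) For all distinct i,j,k and all g ∈ G: Σ_{h∈G} ( q_{ij}q_{ik} κ_{gh⁻¹}^C(κ_h^L(v_j,v_k), ʰv_i) − κ_{gh⁻¹}^C(v_i, κ_h^L(v_j,v_k)) + q_{ik}q_{jk} κ_{gh⁻¹}^C(κ_h^L(v_k,v_i), ʰv_j) − q_{ij}q_{ik} κ_{gh⁻¹}^C(v_j, κ_h^L(v_k,v_i)) + κ_{gh⁻¹}^C(κ_h^L(v_i,v_j),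 ʰv_k) − q_{ik}q_{jk} κ_{gh⁻¹}^C(v_k, κ_h^L(v_i,v_j)) ) = 0. -/
open scoped BigOperators

noncomputable section

namespace QDOA

/-- The generator `vᵢ` of `T(V) ⋊ G`, realized inside the free algebra on `Fin n ⊕ G`. -/
def Xv (k : Type*) [Field k] (n : ℕ) (G : Type*) (i : Fin n) : FreeAlgebra k (Fin n ⊕ G) :=
  FreeAlgebra.ι k (Sum.inl i)

/-- The generator `g ∈ G` of `T(V) ⋊ G`, realized inside the free algebra on `Fin n ⊕ G`. -/
def Xg (k : Type*) [Field k] (n : ℕ) (G : Type*) (g : G) : FreeAlgebra k (Fin n ⊕ G) :=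
  FreeAlgebra.ι k (Sum.inr g)

/-- The element `κ(vᵢ,vⱼ) = ∑_{g} (κ_g^C(vᵢ,vⱼ) + κ_g^L(vᵢ,vⱼ)) # g` of `T(V) ⋊ G`. -/
def kappaElt (k : Type*) [Field k] (n : ℕ) (G : Type*) [Fintype G]
    (kapC : Fin n → Fin n → G → k) (kapL : Fin n → Fin n → G → Fin n → k)
    (i j : Fin n) : FreeAlgebra k (Fin n ⊕ G) :=
  ∑ g : G, (algebraMap k _ (kapC i j g) + ∑ l, kapL i j g l • Xv k n G l) * Xg k n G g

/-- The relations defining `H_{q,κ}` as a quotient of `T(V) ⋊ G`: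
the relations `vᵢ vⱼ = q_{ij} vⱼ vᵢ + κ(vᵢ,vⱼ)` together with the semidirect
product relations `g ⋅ h = gh`, `1_G = 1` and `g vᵢ = (ᵍvᵢ) g`,
where `ᵍvⱼ = ∑ᵢ (ρ g)ᵢⱼ vᵢ`. -/
def relH (k : Type*) [Field k] (n : ℕ) (G : Type*) [Group G] [Fintype G]
    (q : Fin n → Fin n → k) (rho : G → Fin n → Fin n → k)
    (kapC : Fin n → Fin n → G → k) (kapL : Fin n → Fin n → G → Fin n → k) :
    FreeAlgebra k (Fin n ⊕ G) → FreeAlgebra k (Fin n ⊕ G) → Prop := fun a b =>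
  (∃ i j : Fin n, a = Xv k n G i * Xv k n G j ∧
      b = q i j • (Xv k n G j * Xv k n G i) + kappaElt k n G kapC kapL i j) ∨
  (∃ g h : G, a = Xg k n G g * Xg k n G h ∧ b = Xg k n G (g * h)) ∨
  (a = Xg k n G (1 : G) ∧ b = 1) ∨
  (∃ (g : G) (i : Fin n), a = Xg k n G g * Xv k n G i ∧
      b = (∑ l, rho g l i • Xv k n G l) * Xg k n G g)

/-- The filtered algebra `H_{q,κ} = (T(V) ⋊ G)/(vᵢvⱼ − q_{ij}vⱼvᵢ − κ(vᵢ,vⱼ))`. -/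
def Halg (k : Type*) [Field k] (n : ℕ) (G : Type*) [Group G] [Fintype G]
    (q : Fin n → Fin n → k) (rho : G → Fin n → Fin n → k)
    (kapC : Fin n → Fin n → G → k) (kapL : Fin n → Fin n → G → Fin n → k) :=
  RingQuot (relH k n G q rho kapC kapL)

instance (k : Type*) [Field k] (n : ℕ) (G : Type*) [Group G] [Fintype G]
    (q : Fin n → Fin n → k) (rho : G → Fin n → Fin n → k)
    (kapC : Fin n → Fin n → G → k) (kapL : Fin n → Fin n → G → Fin n → k) :
    Ring (Halg k n G q rho kapC kapL) := by unfold Halg; infer_instance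

instance (k : Type*) [Field k] (n : ℕ) (G : Type*) [Group G] [Fintype G]
    (q : Fin n → Fin n → k) (rho : G → Fin n → Fin n → k)
    (kapC : Fin n → Fin n → G → k) (kapL : Fin n → Fin n → G → Fin n → k) :
    Algebra k (Halg k n G q rho kapC kapL) := by unfold Halg; infer_instance

/-- The PBW monomial `v₁^{m₁} ⋯ v_n^{m_n} # g` in `H_{q,κ}`. -/
def monoH (k : Type*) [Field k] (n : ℕ) (G : Type*) [Group G] [Fintype G]
    (q : Fin n → Fin n → k) (rho : G → Fin n → Fin n → k)
    (kapC : Fin n → Fin n → G → k) (kapL : Fin n → Fin n → G → Fin n → k)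
    (p : (Fin n → ℕ) × G) : Halg k n G q rho kapC kapL :=
  ((List.finRange n).map
      (fun i => (RingQuot.mkAlgHom k (relH k n G q rho kapC kapL)
        (Xv k n G i)) ^ (p.1 i))).prod *
    RingQuot.mkAlgHom k (relH k n G q rho kapC kapL) (Xg k n G p.2)

/-- `H_{q,κ}` is a *quantum Drinfeld orbifold algebra*, i.e. a PBW deformation of
`S_q(V) ⋊ G`:  the monomials `v₁^{m₁} ⋯ v_n^{m_n} # g` form a `k`-basis. -/
def IsQDOA (k : Type*) [Field k] (n : ℕ) (G : Type*) [Group G] [Fintype G]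
    (q : Fin n → Fin n → k) (rho : G → Fin n → Fin n → k)
    (kapC : Fin n → Fin n → G → k) (kapL : Fin n → Fin n → G → Fin n → k) : Prop :=
  LinearIndependent k (monoH k n G q rho kapC kapL) ∧
    Submodule.span k (Set.range (monoH k n G q rho kapC kapL)) = ⊤

/-- The relations `vᵢvⱼ = q_{ij} vⱼvᵢ` of the quantum symmetric algebra `S_q(V)`. -/
def relS (k : Type*) [Field k] (n : ℕ) (q : Fin n → Fin n → k) :
    FreeAlgebra k (Fin n) → FreeAlgebra k (Fin n) → Prop := fun a b =>
  ∃ i j : Fin n, a = FreeAlgebra.ι k i * FreeAlgebra.ι k j ∧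
    b = q i j • (FreeAlgebra.ι k j * FreeAlgebra.ι k i)

/-- The quantum symmetric algebra `S_q(V)`. -/
def Sq (k : Type*) [Field k] (n : ℕ) (q : Fin n → Fin n → k) := RingQuot (relS k n q)

instance (k : Type*) [Field k] (n : ℕ) (q : Fin n → Fin n → k) : Ring (Sq k n q) := by
  unfold Sq; infer_instance

instance (k : Type*) [Field k] (n : ℕ) (q : Fin n → Fin n → k) : Algebra k (Sq k n q) := by
  unfold Sq; infer_instance

/-- The image of the basis vector `vᵢ` in `S_q(V)`. -/
def vS (k : Type*) [Field k] (n : ℕ) (q : Fin n → Fin n → k) (i : Fin n) : Sq k n q :=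
  RingQuot.mkAlgHom k (relS k n q) (FreeAlgebra.ι k i)

/-- The element `ᵍvᵢ = ∑ l, (ρ g)ₗᵢ vₗ` of `S_q(V)`. -/
def gvS (k : Type*) [Field k] (n : ℕ) (q : Fin n → Fin n → k) {G : Type*}
    (rho : G → Fin n → Fin n → k) (g : G) (i : Fin n) : Sq k n q :=
  ∑ l, rho g l i • vS k n q l

/-- The element `κ_g^L(vᵢ,vⱼ) = ∑ l, κL i j g l • vₗ` of `S_q(V)`. -/
def kapLS (k : Type*) [Field k] (n : ℕ) (q : Fin n → Fin n → k) {G : Type*}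
    (kapL : Fin n → Fin n → G → Fin n → k) (g : G) (i j : Fin n) : Sq k n q :=
  ∑ l, kapL i j g l • vS k n q l

/-- The vector `ᵍvᵢ ∈ V = Fin n → k`. -/
def gv (k : Type*) [Field k] (n : ℕ) {G : Type*} (rho : G → Fin n → Fin n → k)
    (g : G) (i : Fin n) : Fin n → k := fun m => rho g m i

/-- The standard basis vector `vᵢ` of `V = Fin n → k`. -/
def ev (k : Type*) [Field k] (n : ℕ) (i : Fin n) : Fin n → k := Pi.single i 1

/-- The vector `κ_g^L(vᵢ,vⱼ) ∈ V = Fin n → k`. -/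
def kapLv (k : Type*) [Field k] (n : ℕ) {G : Type*}
    (kapL : Fin n → Fin n → G → Fin n → k) (g : G) (i j : Fin n) : Fin n → k :=
  fun l => kapL i j g l

/-- The bilinear extension of `κ_g^L` to `V × V`. -/
def kapLbil (k : Type*) [Field k] (n : ℕ) {G : Type*}
    (kapL : Fin n → Fin n → G → Fin n → k) (g : G) (x y : Fin n → k) : Fin n → k :=
  fun t => ∑ a, ∑ b, x a * y b * kapL a b g t

/-- The bilinear extension of `κ_g^C` to `V × V`. -/
def kapCbil (k : Type*) [Field k] (n : ℕ) {G : Type*}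
    (kapC : Fin n → Fin n → G → k) (g : G) (x y : Fin n → k) : k :=
  ∑ a, ∑ b, x a * y b * kapC a b g

/-- **Condition (1)**: for all `g, h ∈ G` and `i < j`,
`κ_g^C(vⱼ,vᵢ) = ∑_{k<l} det_{ijkl}(h) κ_{hgh⁻¹}^C(vₗ,vₖ)` and
`ʰ(κ_g^L(vⱼ,vᵢ)) = ∑_{k<l} det_{ijkl}(h) κ_{hgh⁻¹}^L(vₗ,vₖ)`, where
`det_{ijkl}(h) = h_l^j h_k^i − q_{ji} h_l^i h_k^j` is the quantum minor determinant. -/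
def Cond1 (k : Type*) [Field k] (n : ℕ) (G : Type*) [Group G]
    (q : Fin n → Fin n → k) (rho : G → Fin n → Fin n → k)
    (kapC : Fin n → Fin n → G → k) (kapL : Fin n → Fin n → G → Fin n → k) : Prop :=
  ∀ (g h : G) (i j : Fin n), i < j →
    (kapC j i g =
      ∑ a, ∑ b, if a < b then
        (rho h b j * rho h a i - q j i * rho h b i * rho h a j) * kapC b a (h * g * h⁻¹)
      else 0) ∧
    (∀ m, (∑ l, rho h m l * kapL j i g l) =
      ∑ a, ∑ b, if a < b then
        (rho h b j * rho h a i - q j i * rho h b i * rho h a j) * kapL b a (h * g * h⁻¹) m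
      else 0)

/-- **Condition (2)**: for all distinct `i, j, k` and all `g ∈ G`, in `S_q(V)`:
`q_{ji}q_{ki} vᵢ κ_g^L(vₖ,vⱼ) − κ_g^L(vₖ,vⱼ) ᵍvᵢ − q_{kj} vⱼ κ_g^L(vₖ,vᵢ)
 + q_{ji} κ_g^L(vₖ,vᵢ) ᵍvⱼ + vₖ κ_g^L(vⱼ,vᵢ) − q_{ki}q_{kj} κ_g^L(vⱼ,vᵢ) ᵍvₖ = 0`. -/
def Cond2 (k : Type*) [Field k] (n : ℕ) (G : Type*) [Group G]
    (q : Fin n → Fin n → k) (rho : G → Fin n → Fin n → k)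
    (kapL : Fin n → Fin n → G → Fin n → k) : Prop :=
  ∀ (i j m : Fin n) (g : G), i ≠ j → i ≠ m → j ≠ m →
    (q j i * q m i) • (vS k n q i * kapLS k n q kapL g m j)
      - kapLS k n q kapL g m j * gvS k n q rho g i
      - q m j • (vS k n q j * kapLS k n q kapL g m i)
      + q j i • (kapLS k n q kapL g m i * gvS k n q rho g j)
      + vS k n q m * kapLS k n q kapL g j i
      - (q m i * q m j) • (kapLS k n q kapL g j i * gvS k n q rho g m) = 0

/-- **Condition (3)**: for all distinct `i, j, k` and all `g ∈ G`, in `V`: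
`∑_{h∈G} (q_{ij}q_{ik} κ_{gh⁻¹}^L(κ_h^L(vⱼ,vₖ),ʰvᵢ) − κ_{gh⁻¹}^L(vᵢ,κ_h^L(vⱼ,vₖ))
 + q_{ik}q_{jk} κ_{gh⁻¹}^L(κ_h^L(vₖ,vᵢ),ʰvⱼ) − q_{ij}q_{ik} κ_{gh⁻¹}^L(vⱼ,κ_h^L(vₖ,vᵢ))
 + κ_{gh⁻¹}^L(κ_h^L(vᵢ,vⱼ),ʰvₖ) − q_{ik}q_{jk} κ_{gh⁻¹}^L(vₖ,κ_h^L(vᵢ,vⱼ)))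
 = 2(κ_g^C(vⱼ,vₖ)(vᵢ − q_{ij}q_{ik} ᵍvᵢ) + κ_g^C(vₖ,vᵢ)(q_{ij}q_{ik} vⱼ − q_{ik}q_{jk} ᵍvⱼ)
    + κ_g^C(vᵢ,vⱼ)(q_{ik}q_{jk} vₖ − ᵍvₖ))`. -/
def Cond3 (k : Type*) [Field k] (n : ℕ) (G : Type*) [Group G] [Fintype G]
    (q : Fin n → Fin n → k) (rho : G → Fin n → Fin n → k)
    (kapC : Fin n → Fin n → G → k) (kapL : Fin n → Fin n → G → Fin n → k) : Prop :=
  ∀ (i j m : Fin n) (g : G), i ≠ j → i ≠ m → j ≠ m →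
    (∑ h : G,
      ((q i j * q i m) • kapLbil k n kapL (g * h⁻¹) (kapLv k n kapL h j m) (gv k n rho h i)
        - kapLbil k n kapL (g * h⁻¹) (ev k n i) (kapLv k n kapL h j m)
        + (q i m * q j m) • kapLbil k n kapL (g * h⁻¹) (kapLv k n kapL h m i) (gv k n rho h j)
        - (q i j * q i m) • kapLbil k n kapL (g * h⁻¹) (ev k n j) (kapLv k n kapL h m i)
        + kapLbil k n kapL (g * h⁻¹) (kapLv k n kapL h i j) (gv k n rho h m)
        - (q i m * q j m) • kapLbil k n kapL (g * h⁻¹) (ev k n m) (kapLv k n kapL h i j)))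
    = (2 : k) •
      (kapC j m g • (ev k n i - (q i j * q i m) • gv k n rho g i)
        + kapC m i g • ((q i j * q i m) • ev k n j - (q i m * q j m) • gv k n rho g j)
        + kapC i j g • ((q i m * q j m) • ev k n m - gv k n rho g m))

/-- **Condition (4)**: for all distinct `i, j, k` and all `g ∈ G`:
`∑_{h∈G} (q_{ij}q_{ik} κ_{gh⁻¹}^C(κ_h^L(vⱼ,vₖ),ʰvᵢ) − κ_{gh⁻¹}^C(vᵢ,κ_h^L(vⱼ,vₖ))
 + q_{ik}q_{jk} κ_{gh⁻¹}^C(κ_h^L(vₖ,vᵢ),ʰvⱼ) − q_{ij}q_{ik} κ_{gh⁻¹}^C(vⱼ,κ_h^L(vₖ,vᵢ))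
 + κ_{gh⁻¹}^C(κ_h^L(vᵢ,vⱼ),ʰvₖ) − q_{ik}q_{jk} κ_{gh⁻¹}^C(vₖ,κ_h^L(vᵢ,vⱼ))) = 0`. -/
def Cond4 (k : Type*) [Field k] (n : ℕ) (G : Type*) [Group G] [Fintype G]
    (q : Fin n → Fin n → k) (rho : G → Fin n → Fin n → k)
    (kapC : Fin n → Fin n → G → k) (kapL : Fin n → Fin n → G → Fin n → k) : Prop :=
  ∀ (i j m : Fin n) (g : G), i ≠ j → i ≠ m → j ≠ m →
    (∑ h : G,
      ((q i j * q i m) * kapCbil k n kapC (g * h⁻¹) (kapLv k n kapL h j m) (gv k n rho h i)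
        - kapCbil k n kapC (g * h⁻¹) (ev k n i) (kapLv k n kapL h j m)
        + (q i m * q j m) * kapCbil k n kapC (g * h⁻¹) (kapLv k n kapL h m i) (gv k n rho h j)
        - (q i j * q i m) * kapCbil k n kapC (g * h⁻¹) (ev k n j) (kapLv k n kapL h m i)
        + kapCbil k n kapC (g * h⁻¹) (kapLv k n kapL h i j) (gv k n rho h m)
        - (q i m * q j m) * kapCbil k n kapC (g * h⁻¹) (ev k n m) (kapLv k n kapL h i j))) = 0

/-!
The defining relations of `H_{q,κ}`, read as rules sorting the letters of a word and moving group
elements to the right, reduce every word to a combination of PBW monomials, so these always span.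
As in Bergman's diamond lemma they are independent if and only if the words `h vⱼ vᵢ` and `vₘ vⱼ vᵢ`
reduce to the same element in both possible ways, and the four conditions are the coordinates of
these equations.

If the monomials are independent, one compares coefficients in the two reductions of each such word.
Conversely, the rules prescribe recursively how the generators must act on the vector space with
basis the PBW monomials. By induction on the length of words, the equality of the two reductions
makes these operators satisfy the relations of `H_{q,κ}`. They recover the basis when applied to the
monomial `1`, so that the monomials are independent in `H_{q,κ}`. With `G` trivial and `κ = 0` this
also yields the basis of `S_q(V)` by which an equation in `S_q(V)` such as condition (2) becomes one
between coefficients.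
-/

/-- Coordinates `(c, l)` of the element `∑ g, (c g + ∑ i, l g i • vᵢ) # g` of `(k ⊕ V) ⊗ kG`, the
space in which `κ` takes its values. -/
abbrev LowDegree (k : Type*) (n : ℕ) (G : Type*) := (G → k) × (G → Fin n → k)

/-- Coordinates `(e, l)` of the element `∑ g, (∑ a b, e g a b • vₐ v_b + ∑ a, l g a • vₐ) # g` of
`(V ⊗ V ⊕ V) ⊗ kG`, the space containing the products of a generator with a value of `κ`. -/
abbrev HighDegree (k : Type*) (n : ℕ) (G : Type*) := (G → Fin n → Fin n → k) × (G → Fin n → k)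

section Coordinates

variable {k : Type*} [Field k] {n : ℕ} {G : Type*}

/-- The product `p # h`. -/
def rightTranslate [Group G] (h : G) (p : LowDegree k n G) : LowDegree k n G :=
  (fun g => p.1 (g * h⁻¹), fun g => p.2 (g * h⁻¹))

/-- The product `h p`, with `h` moved to the right across the generators. -/
def leftTranslate [Group G] (rho : G → Fin n → Fin n → k) (h : G) (p : LowDegree k n G) :
    LowDegree k n G :=
  (fun g => p.1 (h⁻¹ * g), fun g m => ∑ l, rho h m l * p.2 (h⁻¹ * g) l)

/-- The product `vᵢ p`. -/
def leftMulGen (i : Fin n) (p : LowDegree k n G) : HighDegree k n G :=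
  (fun g a b => ev k n i a * p.2 g b, fun g a => ev k n i a * p.1 g)

/-- The product `p vᵢ`, with `vᵢ` moved to the left across the group elements. -/
def rightMulGen (rho : G → Fin n → Fin n → k) (i : Fin n) (p : LowDegree k n G) :
    HighDegree k n G :=
  (fun g a b => p.2 g a * rho g b i, fun g a => p.1 g * rho g a i)

/-- The tensor `∑ a b, e a b • vₐ ⊗ v_b` is a combination of the relations
`vₐ ⊗ v_b - q a b • v_b ⊗ vₐ` of `S_q(V)`. -/
def IsQuadRel (q : Fin n → Fin n → k) (e : Fin n → Fin n → k) : Prop :=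
  ∀ a b, e a b + q b a * e b a = 0

/-- The coefficients of `ʰvⱼ ʰvᵢ - q j i • ʰvᵢ ʰvⱼ`, that is, of `h` applied to a relation of
`S_q(V)`. -/
def minor (q : Fin n → Fin n → k) (rho : G → Fin n → Fin n → k) (i j : Fin n) (h : G)
    (a b : Fin n) : k :=
  rho h a j * rho h b i - q j i * rho h a i * rho h b j

/-- The alternating sum of condition (2), where `F i a b` stands for `vᵢ κ(vₐ, v_b)` and `F' i a b`
for `κ(vₐ, v_b) vᵢ`. It vanishes identically when `κ(vₐ, v_b) = vₐ v_b - q a b • v_b vₐ`. -/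
def braidedJacobi {N : Type*} [AddCommGroup N] [Module k N] (q : Fin n → Fin n → k)
    (F F' : Fin n → Fin n → Fin n → N) (i j m : Fin n) : N :=
  (q j i * q m i) • F i m j - F' i m j - q m j • F j m i + q j i • F' j m i
    + F m j i - (q m i * q m j) • F' m j i

/-- The element obtained by resolving the overlap of the relations for `vᵢ`, `vⱼ`, `vₘ` in its two
possible ways and subtracting. -/
def overlap (q : Fin n → Fin n → k) (rho : G → Fin n → Fin n → k)
    (κ : Fin n → Fin n → LowDegree k n G) : Fin n → Fin n → Fin n → HighDegree k n G :=
  braidedJacobi q (fun i a b => leftMulGen i (κ a b)) (fun i a b => rightMulGen rho i (κ a b))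

/-- Twice the element `P`, rewritten in degree at most one by means of the relations
`vₐ v_b - q a b • v_b vₐ = κ(vₐ, v_b)`. This is its value when the quadratic part of `P` is a
relation of `S_q(V)`; the factor `2` avoids choosing one of the pairs `(a, b)` and `(b, a)`. -/
def doubleReduce [Group G] [Fintype G] (κ : Fin n → Fin n → LowDegree k n G)
    (P : HighDegree k n G) : LowDegree k n G :=
  (∑ h, ∑ a, ∑ b, P.1 h a b • rightTranslate h (κ a b)) + (0, (2 : k) • P.2)

/-- All ambiguities of the rewriting system defining `H_{q,κ}` resolve: `group_gen_gen` concerns the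
words `h vⱼ vᵢ`, while `quad` and `low` are the quadratic and lower parts of the overlaps
`vₘ vⱼ vᵢ`. The equations in degree at most one are doubled, as in `doubleReduce`. -/
structure OverlapsResolve [Group G] [Fintype G] (q : Fin n → Fin n → k)
    (rho : G → Fin n → Fin n → k) (κ : Fin n → Fin n → LowDegree k n G) : Prop where
  group_gen_gen : ∀ (h : G) (i j : Fin n), i < j →
    (2 : k) • leftTranslate rho h (κ j i) =
      ∑ a, ∑ b, minor q rho i j h a b • rightTranslate h (κ a b)
  quad : ∀ i j m : Fin n, i ≠ j → i ≠ m → j ≠ m →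
    ∀ g, IsQuadRel q ((overlap q rho κ i j m).1 g)
  low : ∀ i j m : Fin n, i ≠ j → i ≠ m → j ≠ m → doubleReduce κ (overlap q rho κ i j m) = 0

end Coordinates

section Operators

variable {k : Type*} [Field k] {n : ℕ} {G : Type*} [Fintype G]
  {M : Type*} [AddCommGroup M] [Module k M]

/-- The operator by which an element of degree at most one acts on a module on which `vᵢ` acts by
`X i` and `g ∈ G` acts by `T g`. -/
def lowOp (X : Fin n → Module.End k M) (T : G → Module.End k M) :
    LowDegree k n G →ₗ[k] Module.End k M where
  toFun p := ∑ g, (p.1 g • T g + ∑ l, p.2 g l • (X l * T g))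
  map_add' p p' := by
    simp only [Prod.fst_add, Prod.snd_add, Pi.add_apply, add_smul, Finset.sum_add_distrib]
    abel
  map_smul' c p := by
    simp only [Prod.smul_fst, Prod.smul_snd, Pi.smul_apply, smul_eq_mul, mul_smul,
      Finset.smul_sum, smul_add, RingHom.id_apply]

/-- The operator by which an element of `(V ⊗ V ⊕ V) ⊗ kG` acts. -/
def quadOp (X : Fin n → Module.End k M) (T : G → Module.End k M) :
    HighDegree k n G →ₗ[k] Module.End k M where
  toFun P := ∑ g, ((∑ a, ∑ b, P.1 g a b • (X a * X b * T g)) + ∑ a, P.2 g a • (X a * T g))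
  map_add' P P' := by
    simp only [Prod.fst_add, Prod.snd_add, Pi.add_apply, add_smul, Finset.sum_add_distrib]
    abel
  map_smul' c P := by
    simp only [Prod.smul_fst, Prod.smul_snd, Pi.smul_apply, smul_eq_mul, mul_smul,
      Finset.smul_sum, smul_add, RingHom.id_apply]

variable {X : Fin n → Module.End k M} {T : G → Module.End k M}

lemma lowOp_apply (p : LowDegree k n G) (y : M) :
    lowOp X T p y = ∑ g, (p.1 g • T g y + ∑ l, p.2 g l • X l (T g y)) := by
  simp [lowOp, LinearMap.sum_apply]

lemma quadOp_apply (P : HighDegree k n G) (y : M) :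
    quadOp X T P y =
      ∑ g, ((∑ a, ∑ b, P.1 g a b • X a (X b (T g y))) + ∑ a, P.2 g a • X a (T g y)) := by
  simp [quadOp, LinearMap.sum_apply]

lemma apply_lowOp (i : Fin n) (p : LowDegree k n G) (y : M) :
    X i (lowOp X T p y) = quadOp X T (leftMulGen i p) y := by
  rw [lowOp_apply, quadOp_apply, map_sum]
  refine Finset.sum_congr rfl fun g _ => ?_
  simp only [leftMulGen, ev, map_add, map_smul, map_sum, Pi.single_apply, ite_mul, one_mul,
    zero_mul, ite_smul, zero_smul, Finset.sum_ite_eq', Finset.mem_univ, if_true]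
  rw [Finset.sum_comm]
  simp [add_comm]

lemma lowOp_antisymm {q : Fin n → Fin n → k} {κ : Fin n → Fin n → LowDegree k n G}
    (hκ : ∀ i j, κ i j = -(q i j) • κ j i) (i j : Fin n) :
    lowOp X T (κ i j) = -(q i j • lowOp X T (κ j i)) := by
  rw [hκ, map_smul, neg_smul]

variable [Group G] (q : Fin n → Fin n → k) (rho : G → Fin n → Fin n → k)
  (κ : Fin n → Fin n → LowDegree k n G)

variable (X T) in
/-- The vectors at which the relations of `H_{q,κ}` hold for the operators `X` and `T`. -/
def relationSubmodule : Submodule k M :=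
  (⨅ (a) (b), LinearMap.eqLocus (X a * X b) (q a b • (X b * X a) + lowOp X T (κ a b))) ⊓
    (⨅ (h) (i), LinearMap.eqLocus (T h * X i) (∑ l, rho h l i • (X l * T h))) ⊓
    ⨅ (g) (h), LinearMap.eqLocus (T g * T h) (T (g * h))

variable {q rho κ}

lemma mem_relationSubmodule {z : M} : z ∈ relationSubmodule X T q rho κ ↔
    (∀ a b, X a (X b z) = q a b • X b (X a z) + lowOp X T (κ a b) z) ∧
      (∀ h i, T h (X i z) = ∑ l, rho h l i • X l (T h z)) ∧
      ∀ g h, T g (T h z) = T (g * h) z := by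
  simp [relationSubmodule, Submodule.mem_inf, Submodule.mem_iInf, LinearMap.mem_eqLocus,
    LinearMap.sum_apply, and_assoc]

lemma gen_gen_of_mem {z : M} (hz : z ∈ relationSubmodule X T q rho κ) (a b : Fin n) :
    X a (X b z) = q a b • X b (X a z) + lowOp X T (κ a b) z :=
  (mem_relationSubmodule.1 hz).1 a b

lemma group_gen_of_mem {z : M} (hz : z ∈ relationSubmodule X T q rho κ) (h : G) (i : Fin n) :
    T h (X i z) = ∑ l, rho h l i • X l (T h z) :=
  (mem_relationSubmodule.1 hz).2.1 h i

lemma group_group_of_mem {z : M} (hz : z ∈ relationSubmodule X T q rho κ) (g h : G) :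
    T g (T h z) = T (g * h) z :=
  (mem_relationSubmodule.1 hz).2.2 g h

lemma lowOp_gen_of_mem {y : M} (hy : y ∈ relationSubmodule X T q rho κ) (p : LowDegree k n G)
    (i : Fin n) : lowOp X T p (X i y) = quadOp X T (rightMulGen rho i p) y := by
  rw [lowOp_apply, quadOp_apply]
  refine Finset.sum_congr rfl fun h _ => ?_
  simp only [rightMulGen, group_gen_of_mem hy, map_sum, map_smul, Finset.smul_sum, mul_smul]
  rw [add_comm]

lemma lowOp_group_of_mem {y : M} (hy : y ∈ relationSubmodule X T q rho κ) (p : LowDegree k n G)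
    (h : G) : lowOp X T p (T h y) = lowOp X T (rightTranslate h p) y := by
  rw [lowOp_apply, lowOp_apply]
  refine Fintype.sum_equiv (Equiv.mulRight h) _ _ fun g => ?_
  simp [rightTranslate, group_group_of_mem hy]

lemma group_lowOp_of_mem {y : M} (hy : y ∈ relationSubmodule X T q rho κ)
    (hTy : ∀ g, T g y ∈ relationSubmodule X T q rho κ) (h : G) (p : LowDegree k n G) :
    T h (lowOp X T p y) = lowOp X T (leftTranslate rho h p) y := by
  rw [lowOp_apply, lowOp_apply, map_sum]
  refine Fintype.sum_equiv (Equiv.mulLeft h) _ _ fun g => ?_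
  simp only [leftTranslate, map_add, map_smul, map_sum, group_gen_of_mem (hTy g),
    group_group_of_mem hy, Equiv.coe_mulLeft, inv_mul_cancel_left, Finset.smul_sum,
    Finset.sum_smul]
  congr 1
  rw [Finset.sum_comm]
  simp only [smul_smul, mul_comm]

lemma two_smul_sum_gen_gen {z : M} (hz : z ∈ relationSubmodule X T q rho κ)
    {e : Fin n → Fin n → k} (he : IsQuadRel q e) :
    (2 : k) • ∑ a, ∑ b, e a b • X a (X b z) = ∑ a, ∑ b, e a b • lowOp X T (κ a b) z := by
  have expand : ∑ a, ∑ b, e a b • X a (X b z) =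
      (∑ a, ∑ b, (e a b * q a b) • X b (X a z)) + ∑ a, ∑ b, e a b • lowOp X T (κ a b) z := by
    simp only [← Finset.sum_add_distrib]
    refine Finset.sum_congr rfl fun a _ => Finset.sum_congr rfl fun b _ => ?_
    rw [gen_gen_of_mem hz a b, smul_add, mul_smul]
  have swap : ∑ a, ∑ b, (e a b * q a b) • X b (X a z) = -∑ a, ∑ b, e a b • X a (X b z) := by
    rw [Finset.sum_comm]
    simp only [← Finset.sum_neg_distrib]
    refine Finset.sum_congr rfl fun a _ => Finset.sum_congr rfl fun b _ => ?_
    rw [← neg_smul]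
    congr 1
    linear_combination he a b
  rw [two_smul]
  nth_rewrite 2 [expand]
  rw [swap, add_neg_cancel_left]

lemma two_smul_quadOp {y : M} (hy : y ∈ relationSubmodule X T q rho κ)
    (hTy : ∀ g, T g y ∈ relationSubmodule X T q rho κ) {P : HighDegree k n G}
    (hP : ∀ g, IsQuadRel q (P.1 g)) :
    (2 : k) • quadOp X T P y = lowOp X T (doubleReduce κ P) y := by
  have linear : ∑ g, (2 : k) • ∑ a, P.2 g a • X a (T g y) = lowOp X T (0, (2 : k) • P.2) y := by
    simp [lowOp_apply, Finset.smul_sum, mul_smul]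
  rw [doubleReduce, map_add, LinearMap.add_apply, ← linear, quadOp_apply, Finset.smul_sum]
  simp only [smul_add, two_smul_sum_gen_gen (hTy _) (hP _), lowOp_group_of_mem hy,
    Finset.sum_add_distrib, map_sum, map_smul, LinearMap.sum_apply, LinearMap.smul_apply]

lemma quadOp_overlap {y : M} (hy : y ∈ relationSubmodule X T q rho κ) (i j m : Fin n) :
    quadOp X T (overlap q rho κ i j m) y =
      braidedJacobi q (fun i a b => X i (lowOp X T (κ a b) y))
        (fun i a b => lowOp X T (κ a b) (X i y)) i j m := by
  simp only [overlap, braidedJacobi, map_add, map_sub, map_smul, LinearMap.add_apply,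
    LinearMap.sub_apply, LinearMap.smul_apply, apply_lowOp, lowOp_gen_of_mem hy]

lemma two_smul_group_relation {y : M} (hy : y ∈ relationSubmodule X T q rho κ)
    (hTy : ∀ g, T g y ∈ relationSubmodule X T q rho κ) {i j : Fin n} {h : G}
    (hminor : IsQuadRel q (minor q rho i j h)) :
    (2 : k) • (T h (lowOp X T (κ j i) y) - ∑ a, ∑ b, minor q rho i j h a b • X a (X b (T h y))) =
      lowOp X T ((2 : k) • leftTranslate rho h (κ j i)
        - ∑ a, ∑ b, minor q rho i j h a b • rightTranslate h (κ a b)) y := by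
  simp only [smul_sub, two_smul_sum_gen_gen (hTy h) hminor, group_lowOp_of_mem hy hTy,
    lowOp_group_of_mem hy, map_sub, map_sum, map_smul, LinearMap.sub_apply, LinearMap.sum_apply,
    LinearMap.smul_apply]

end Operators

section Words

variable {k : Type*} [Field k] {n : ℕ} {G : Type*} {M : Type*} [AddCommGroup M] [Module k M]

/-- The words `i₁ ≤ i₂ ≤ ⋯`, indexing the monomials `v_{i₁} v_{i₂} ⋯`. -/
abbrev IsSorted (w : List (Fin n)) : Prop := w.Pairwise (· ≤ ·)

lemma isSorted_nil : IsSorted ([] : List (Fin n)) := List.Pairwise.nil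

lemma isSorted_singleton (i : Fin n) : IsSorted [i] := List.pairwise_singleton _ _

lemma IsSorted.cons_cons {w : List (Fin n)} {i j : Fin n} (hw : IsSorted (j :: w)) (hij : i ≤ j) :
    IsSorted (i :: j :: w) := by
  simp only [IsSorted, List.pairwise_cons, List.mem_cons, forall_eq_or_imp] at hw ⊢
  exact ⟨⟨hij, fun a ha => hij.trans (hw.1 a ha)⟩, hw⟩

lemma IsSorted.cons_orderedInsert {w : List (Fin n)} {i j : Fin n} (hw : IsSorted (j :: w))
    (hij : j < i) : IsSorted (j :: w.orderedInsert (· ≤ ·) i) := by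
  simpa only [List.orderedInsert_cons, if_neg hij.not_ge] using List.Pairwise.orderedInsert i _ hw

lemma IsSorted.orderedInsert_eq_cons {w : List (Fin n)} {i : Fin n} (hw : IsSorted (i :: w)) :
    w.orderedInsert (· ≤ ·) i = i :: w := by
  cases w with
  | nil => rfl
  | cons j w => rw [List.orderedInsert_cons, if_pos (List.rel_of_pairwise_cons hw (by simp))]

lemma IsSorted.cons_or_exists_head_lt {w : List (Fin n)} (hw : IsSorted w) (i : Fin n) :
    IsSorted (i :: w) ∨ ∃ j w', w = j :: w' ∧ j < i := by
  cases w with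
  | nil => exact Or.inl (isSorted_singleton _)
  | cons j w =>
    rcases le_or_gt i j with h | h
    · exact Or.inl (hw.cons_cons h)
    · exact Or.inr ⟨j, w, rfl, h⟩

variable (k) in
/-- The span of the monomials `b w g` for sorted words `w` of length at most `d`. -/
def wordFiltration (b : List (Fin n) → G → M) (d : ℕ) : Submodule k M :=
  Submodule.span k {x | ∃ w g, IsSorted w ∧ w.length ≤ d ∧ x = b w g}

lemma wordFiltration_mono (b : List (Fin n) → G → M) : Monotone (wordFiltration k b) :=
  fun _ _ hde => Submodule.span_mono fun _ ⟨w, g, hw, hl, hx⟩ => ⟨w, g, hw, hl.trans hde, hx⟩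

lemma mem_wordFiltration (b : List (Fin n) → G → M) {d : ℕ} {w : List (Fin n)} (hw : IsSorted w)
    (hl : w.length ≤ d) (g : G) : b w g ∈ wordFiltration k b d :=
  Submodule.subset_span ⟨w, g, hw, hl, rfl⟩

lemma wordFiltration_le {b : List (Fin n) → G → M} {d : ℕ} {N : Submodule k M}
    (h : ∀ w, IsSorted w → w.length ≤ d → ∀ g, b w g ∈ N) : wordFiltration k b d ≤ N :=
  Submodule.span_le.2 fun _ ⟨w, g, hw, hl, hx⟩ => hx ▸ h w hw hl g

/-- The operators `X i` and `T h` act on words of length at most `d` as multiplication by `vᵢ` and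
by `h` do in `S_q(V) ⋊ G`, up to the value of a scalar and shorter words. -/
structure HasLeadingTerms (X : Fin n → Module.End k M) (T : G → Module.End k M)
    (b : List (Fin n) → G → M) (d : ℕ) : Prop where
  gen : ∀ w, IsSorted w → w.length ≤ d → ∀ i g, ∃ c : k,
    X i (b w g) - c • b (w.orderedInsert (· ≤ ·) i) g ∈ wordFiltration k b w.length
  group : ∀ w, IsSorted w → w.length ≤ d → ∀ h g, T h (b w g) ∈ wordFiltration k b w.length

namespace HasLeadingTerms

variable {X : Fin n → Module.End k M} {T : G → Module.End k M} {b : List (Fin n) → G → M} {d e : ℕ}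

lemma gen_mem (H : HasLeadingTerms X T b d) (he : e ≤ d) (i : Fin n) {x : M}
    (hx : x ∈ wordFiltration k b e) : X i x ∈ wordFiltration k b (e + 1) := by
  suffices h : wordFiltration k b e ≤ (wordFiltration k b (e + 1)).comap (X i) from h hx
  refine wordFiltration_le fun w hw hl g => ?_
  obtain ⟨c, hc⟩ := H.gen w hw (hl.trans he) i g
  have leading : c • b (w.orderedInsert (· ≤ ·) i) g ∈ wordFiltration k b (e + 1) :=
    Submodule.smul_mem _ _ (mem_wordFiltration b (List.Pairwise.orderedInsert i w hw)
      (by rw [List.orderedInsert_length]; lia) g)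
  exact (Submodule.sub_mem_iff_left _ leading).1 (wordFiltration_mono b (by lia) hc)

lemma group_mem (H : HasLeadingTerms X T b d) (he : e ≤ d) (h : G) {x : M}
    (hx : x ∈ wordFiltration k b e) : T h x ∈ wordFiltration k b e := by
  suffices hle : wordFiltration k b e ≤ (wordFiltration k b e).comap (T h) from hle hx
  exact wordFiltration_le fun w hw hl g =>
    wordFiltration_mono b hl (H.group w hw (hl.trans he) h g)

lemma lowOp_mem [Fintype G] (H : HasLeadingTerms X T b d) (he : e ≤ d) (p : LowDegree k n G)
    {x : M} (hx : x ∈ wordFiltration k b e) : lowOp X T p x ∈ wordFiltration k b (e + 1) := by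
  rw [lowOp_apply]
  have hT : ∀ h, T h x ∈ wordFiltration k b e := fun h => H.group_mem he h hx
  exact Submodule.sum_mem _ fun h _ => Submodule.add_mem _
    (Submodule.smul_mem _ _ (wordFiltration_mono b e.le_succ (hT h)))
    (Submodule.sum_mem _ fun l _ => Submodule.smul_mem _ _ (H.gen_mem he l (hT h)))

end HasLeadingTerms

end Words

section ApproxAction

variable {k : Type*} [Field k] {n : ℕ} {G : Type*} [Group G] [Fintype G]
  {M : Type*} [AddCommGroup M] [Module k M]

/-- The recursion by which left multiplication on the PBW monomials `b w g` is determined. The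
operators of level `d` are subject to it on the words of length at most `d`; since rewriting
`vᵢ vⱼ` with `j < i` involves operators on words of the same length, the level is needed to make the
recursion well-founded. -/
structure IsApproxAction (q : Fin n → Fin n → k) (rho : G → Fin n → Fin n → k)
    (κ : Fin n → Fin n → LowDegree k n G) (X : ℕ → Fin n → Module.End k M)
    (T : ℕ → G → Module.End k M) (b : List (Fin n) → G → M) : Prop where
  gen_of_isSorted : ∀ d i w g, IsSorted (i :: w) → X d i (b w g) = b (i :: w) g
  gen_of_lt : ∀ d i j w g, IsSorted (j :: w) → w.length = d → j < i →
    X (d + 1) i (b (j :: w) g) =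
      q i j • X d j (X d i (b w g)) + lowOp (X d) (T d) (κ i j) (b w g)
  gen_succ : ∀ d i w g, IsSorted w → w.length ≤ d → X (d + 1) i (b w g) = X d i (b w g)
  group_nil : ∀ d h g, T d h (b [] g) = b [] (h * g)
  group_cons : ∀ d h j w g, IsSorted (j :: w) → w.length = d →
    T (d + 1) h (b (j :: w) g) = ∑ l, rho h l j • X d l (T d h (b w g))
  group_succ : ∀ d h w g, IsSorted w → w.length ≤ d → T (d + 1) h (b w g) = T d h (b w g)

/-- The same recursion for a single family of operators, subject to it on all words. -/
abbrev IsPBWAction (q : Fin n → Fin n → k) (rho : G → Fin n → Fin n → k)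
    (κ : Fin n → Fin n → LowDegree k n G) (X : Fin n → Module.End k M) (T : G → Module.End k M)
    (b : List (Fin n) → G → M) : Prop :=
  IsApproxAction q rho κ (fun _ => X) (fun _ => T) b

namespace IsApproxAction

variable {q : Fin n → Fin n → k} {rho : G → Fin n → Fin n → k}
  {κ : Fin n → Fin n → LowDegree k n G} {X : ℕ → Fin n → Module.End k M}
  {T : ℕ → G → Module.End k M} {b : List (Fin n) → G → M} {d : ℕ}

lemma exists_leadingCoeff_cons (H : IsApproxAction q rho κ X T b)
    (ih : HasLeadingTerms (X d) (T d) b d) {i j : Fin n} {w : List (Fin n)}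
    (hw : IsSorted (j :: w)) (hl : w.length = d) (g : G) : ∃ c : k,
      X (d + 1) i (b (j :: w) g) - c • b ((j :: w).orderedInsert (· ≤ ·) i) g ∈
        wordFiltration k b (d + 1) := by
  rcases le_or_gt i j with hij | hij
  · refine ⟨1, ?_⟩
    have hs := hw.cons_cons hij
    rw [H.gen_of_isSorted _ i _ g hs, hs.orderedInsert_eq_cons, one_smul, sub_self]
    exact Submodule.zero_mem _
  · obtain ⟨c, hc⟩ := ih.gen w hw.of_cons hl.le i g
    refine ⟨q i j * c, ?_⟩
    rw [H.gen_of_lt d i j w g hw hl hij, List.orderedInsert_cons, if_neg hij.not_ge, mul_smul,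
      ← H.gen_of_isSorted d j _ g (hw.cons_orderedInsert hij), add_sub_right_comm, ← smul_sub,
      ← map_smul, ← map_sub]
    rw [hl] at hc
    exact Submodule.add_mem _ (Submodule.smul_mem _ _ (ih.gen_mem le_rfl j hc))
      (ih.lowOp_mem le_rfl _ (mem_wordFiltration b hw.of_cons hl.le g))

theorem hasLeadingTerms (H : IsApproxAction q rho κ X T b) (d : ℕ) :
    HasLeadingTerms (X d) (T d) b d := by
  induction d with
  | zero =>
    constructor <;> intro w hw hl <;> obtain rfl := List.length_eq_zero_iff.1 (Nat.le_zero.1 hl)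
    · refine fun i g => ⟨1, ?_⟩
      simp [H.gen_of_isSorted 0 i [] g (isSorted_singleton _)]
    · intro h g
      rw [H.group_nil]
      exact mem_wordFiltration b hw le_rfl _
  | succ d ih =>
    constructor <;> intro w hw hl <;> rcases Nat.le_succ_iff.1 hl with hd | hd
    · simpa only [H.gen_succ d _ w _ hw hd] using ih.gen w hw hd
    · obtain ⟨j, w, rfl⟩ := List.exists_cons_of_length_eq_add_one hd
      rw [hd]
      exact fun i g => H.exists_leadingCoeff_cons ih hw (Nat.succ.inj hd) g
    · simpa only [H.group_succ d _ w _ hw hd] using ih.group w hw hd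
    · obtain ⟨j, w, rfl⟩ := List.exists_cons_of_length_eq_add_one hd
      obtain rfl : w.length = d := Nat.succ.inj hd
      intro h g
      rw [H.group_cons _ h j w g hw rfl]
      exact Submodule.sum_mem _ fun l _ => Submodule.smul_mem _ _
        (ih.gen_mem le_rfl l (ih.group w hw.of_cons le_rfl h g))

lemma gen_gen_eq_of_agree (H : IsApproxAction q rho κ X T b) {i j : Fin n} {w : List (Fin n)}
    {g : G} (hw : IsSorted (j :: w)) (hj : j < i) {A : Module.End k M}
    (hA : ∀ x ∈ wordFiltration k b w.length, A x = X w.length j x)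
    (hA_insert : A (b (w.orderedInsert (· ≤ ·) i) g) = b (j :: w.orderedInsert (· ≤ ·) i) g) :
    A (X w.length i (b w g)) = X w.length j (X w.length i (b w g)) := by
  obtain ⟨c, hc⟩ := (H.hasLeadingTerms w.length).gen w hw.of_cons le_rfl i g
  have agree := hA _ hc
  rw [map_sub, map_sub, map_smul, map_smul, hA_insert,
    H.gen_of_isSorted _ j _ g (hw.cons_orderedInsert hj)] at agree
  exact sub_left_injective agree

end IsApproxAction

end ApproxAction

section Construction

variable (k : Type*) [Field k] (n : ℕ) (G : Type*)

/-- The vector space whose basis are the PBW monomials, indexed by a sorted word and an element of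
`G`. -/
abbrev PBWSpace := ({w : List (Fin n) // IsSorted w} × G) →₀ k

/-- The PBW monomial of the word `w` and of `g ∈ G`, with the junk value `0` if `w` is not
sorted. -/
def pbwMonomial (w : List (Fin n)) (g : G) : PBWSpace k n G :=
  if hw : IsSorted w then Finsupp.single (⟨w, hw⟩, g) 1 else 0

variable {k n G}

lemma pbwMonomial_of_isSorted {w : List (Fin n)} (hw : IsSorted w) (g : G) :
    pbwMonomial k n G w g = Finsupp.single (⟨w, hw⟩, g) 1 :=
  dif_pos hw

lemma eq_top_of_pbwMonomial_mem {N : Submodule k (PBWSpace k n G)}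
    (h : ∀ w, IsSorted w → ∀ g, pbwMonomial k n G w g ∈ N) : N = ⊤ := by
  refine eq_top_iff.2 ((Finsupp.basisSingleOne (R := k)).span_eq.symm.trans_le ?_)
  refine Submodule.span_le.2 ?_
  rintro _ ⟨⟨⟨w, hw⟩, g⟩, rfl⟩
  simpa [pbwMonomial_of_isSorted hw] using h w hw g

/-- The operator sending the PBW monomial of `w` and `g` to `f w g`. -/
def onMonomials (f : List (Fin n) → G → PBWSpace k n G) : Module.End k (PBWSpace k n G) :=
  Finsupp.linearCombination k fun p => f p.1 p.2

lemma onMonomials_pbwMonomial (f : List (Fin n) → G → PBWSpace k n G) {w : List (Fin n)}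
    (hw : IsSorted w) (g : G) : onMonomials f (pbwMonomial k n G w g) = f w g := by
  simp [onMonomials, pbwMonomial_of_isSorted hw]

/-- The limit of a sequence of operators whose terms of index at least `d` agree on the words of
length at most `d`. -/
def wordwiseLimit (A : ℕ → Module.End k (PBWSpace k n G)) : Module.End k (PBWSpace k n G) :=
  onMonomials fun w g => A w.length (pbwMonomial k n G w g)

lemma wordwiseLimit_apply {A : ℕ → Module.End k (PBWSpace k n G)}
    (hA : ∀ d w g, IsSorted w → w.length ≤ d →
      A (d + 1) (pbwMonomial k n G w g) = A d (pbwMonomial k n G w g))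
    {d : ℕ} {x : PBWSpace k n G} (hx : x ∈ wordFiltration k (pbwMonomial k n G) d) :
    wordwiseLimit A x = A d x := by
  have stable : ∀ w g, IsSorted w → w.length ≤ d →
      A w.length (pbwMonomial k n G w g) = A d (pbwMonomial k n G w g) := fun w g hw hl => by
    clear hx
    induction d, hl using Nat.le_induction with
    | base => rfl
    | succ d hd ih => rw [hA d w g hw hd, ih]
  suffices h : wordFiltration k (pbwMonomial k n G) d ≤ LinearMap.eqLocus (wordwiseLimit A) (A d)
    from h hx
  exact wordFiltration_le fun w hw hl g =>
    (onMonomials_pbwMonomial _ hw g).trans (stable w g hw hl)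

/-- The operator of `h ∈ G` at level `d + 1` of the recursion `IsApproxAction`, in terms of the
operators at level `d`. -/
def nextGroup (rho : G → Fin n → Fin n → k) (d : ℕ) (X : Fin n → Module.End k (PBWSpace k n G))
    (T : G → Module.End k (PBWSpace k n G)) (h : G) : Module.End k (PBWSpace k n G) :=
  onMonomials fun
    | [], g => T h (pbwMonomial k n G [] g)
    | j :: w, g =>
      if w.length = d then ∑ l, rho h l j • X l (T h (pbwMonomial k n G w g))
      else T h (pbwMonomial k n G (j :: w) g)

/-- The operator of `vᵢ` at level `d + 1` of the recursion `IsApproxAction`, in terms of the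
operators at level `d`. -/
def nextGen [Fintype G] (q : Fin n → Fin n → k) (κ : Fin n → Fin n → LowDegree k n G) (d : ℕ)
    (X : Fin n → Module.End k (PBWSpace k n G)) (T : G → Module.End k (PBWSpace k n G))
    (i : Fin n) : Module.End k (PBWSpace k n G) :=
  onMonomials fun
    | [], g => X i (pbwMonomial k n G [] g)
    | j :: w, g =>
      if w.length = d ∧ j < i then
        q i j • X j (X i (pbwMonomial k n G w g)) + lowOp X T (κ i j) (pbwMonomial k n G w g)
      else X i (pbwMonomial k n G (j :: w) g)

section

variable {q : Fin n → Fin n → k} {rho : G → Fin n → Fin n → k}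
  {κ : Fin n → Fin n → LowDegree k n G} {d : ℕ} {X : Fin n → Module.End k (PBWSpace k n G)}
  {T : G → Module.End k (PBWSpace k n G)} {w : List (Fin n)} {j : Fin n}

lemma nextGroup_cons (h : G) (hw : IsSorted (j :: w)) (hl : w.length = d) (g : G) :
    nextGroup rho d X T h (pbwMonomial k n G (j :: w) g) =
      ∑ l, rho h l j • X l (T h (pbwMonomial k n G w g)) :=
  (onMonomials_pbwMonomial _ hw g).trans (if_pos hl)

lemma nextGroup_of_length_le (h : G) (hw : IsSorted w) (hl : w.length ≤ d) (g : G) :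
    nextGroup rho d X T h (pbwMonomial k n G w g) = T h (pbwMonomial k n G w g) := by
  rw [nextGroup, onMonomials_pbwMonomial _ hw]
  cases w with
  | nil => rfl
  | cons j w => exact if_neg fun h => by simp [h] at hl

variable [Fintype G]

lemma nextGen_of_lt {i : Fin n} (hw : IsSorted (j :: w)) (hl : w.length = d) (hj : j < i) (g : G) :
    nextGen q κ d X T i (pbwMonomial k n G (j :: w) g) =
      q i j • X j (X i (pbwMonomial k n G w g)) + lowOp X T (κ i j) (pbwMonomial k n G w g) :=
  (onMonomials_pbwMonomial _ hw g).trans (if_pos ⟨hl, hj⟩)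

lemma nextGen_of_isSorted {i : Fin n} (hw : IsSorted (i :: w)) (g : G) :
    nextGen q κ d X T i (pbwMonomial k n G w g) = X i (pbwMonomial k n G w g) := by
  rw [nextGen, onMonomials_pbwMonomial _ hw.of_cons]
  cases w with
  | nil => rfl
  | cons j w => exact if_neg fun h => (List.rel_of_pairwise_cons hw (by simp)).not_gt h.2

lemma nextGen_of_length_le (i : Fin n) (hw : IsSorted w) (hl : w.length ≤ d) (g : G) :
    nextGen q κ d X T i (pbwMonomial k n G w g) = X i (pbwMonomial k n G w g) := by
  rw [nextGen, onMonomials_pbwMonomial _ hw]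
  cases w with
  | nil => rfl
  | cons j w => exact if_neg fun h => by simp [h.1] at hl

end

variable [Fintype G] [Group G] (q : Fin n → Fin n → k) (rho : G → Fin n → Fin n → k)
  (κ : Fin n → Fin n → LowDegree k n G)

/-- The operators of `vᵢ` and `h` at each level of the recursion `IsApproxAction`. -/
def approxOps : ℕ → (Fin n → Module.End k (PBWSpace k n G)) × (G → Module.End k (PBWSpace k n G))
  | 0 => (fun i => onMonomials fun w g => pbwMonomial k n G (i :: w) g,
      fun h => onMonomials fun w g => pbwMonomial k n G w (h * g))
  | d + 1 => (nextGen q κ d (approxOps d).1 (approxOps d).2,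
      nextGroup rho d (approxOps d).1 (approxOps d).2)

lemma isApproxAction_approxOps :
    IsApproxAction q rho κ (fun d => (approxOps q rho κ d).1) (fun d => (approxOps q rho κ d).2)
      (pbwMonomial k n G) where
  gen_of_isSorted d i w g hw := by
    induction d with
    | zero => rw [approxOps, onMonomials_pbwMonomial _ hw.of_cons]
    | succ d ih => rw [approxOps, nextGen_of_isSorted hw, ih]
  gen_of_lt d i j w g hw hl hj := nextGen_of_lt hw hl hj g
  gen_succ d i w g hw hl := nextGen_of_length_le i hw hl g
  group_nil d h g := by
    induction d with
    | zero => rw [approxOps, onMonomials_pbwMonomial _ isSorted_nil]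
    | succ d ih => rw [approxOps, nextGroup_of_length_le h isSorted_nil (Nat.zero_le d), ih]
  group_cons d h j w g hw hl := nextGroup_cons h hw hl g
  group_succ d h w g hw hl := nextGroup_of_length_le h hw hl g

lemma IsApproxAction.isPBWAction_wordwiseLimit {q : Fin n → Fin n → k}
    {rho : G → Fin n → Fin n → k} {κ : Fin n → Fin n → LowDegree k n G}
    {X : ℕ → Fin n → Module.End k (PBWSpace k n G)} {T : ℕ → G → Module.End k (PBWSpace k n G)}
    (H : IsApproxAction q rho κ X T (pbwMonomial k n G)) :
    IsPBWAction q rho κ (fun i => wordwiseLimit fun d => X d i)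
      (fun h => wordwiseLimit fun d => T d h) (pbwMonomial k n G) := by
  have hX : ∀ d i x, x ∈ wordFiltration k (pbwMonomial k n G) d →
      wordwiseLimit (fun d => X d i) x = X d i x :=
    fun d i _ => wordwiseLimit_apply (d := d) fun d => H.gen_succ d i
  have hT : ∀ d h x, x ∈ wordFiltration k (pbwMonomial k n G) d →
      wordwiseLimit (fun d => T d h) x = T d h x :=
    fun d h _ => wordwiseLimit_apply (d := d) fun d => H.group_succ d h
  have mem : ∀ {d w} g, IsSorted w → w.length ≤ d →
      pbwMonomial k n G w g ∈ wordFiltration k (pbwMonomial k n G) d :=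
    fun g hw hl => mem_wordFiltration _ hw hl g
  have hX_sorted : ∀ i w g, IsSorted (i :: w) →
      wordwiseLimit (fun d => X d i) (pbwMonomial k n G w g) = pbwMonomial k n G (i :: w) g :=
    fun i w g hw => (hX _ _ _ (mem g hw.of_cons le_rfl)).trans (H.gen_of_isSorted _ i w g hw)
  refine ⟨fun _ => hX_sorted, ?_, fun _ _ _ _ _ _ => rfl, fun _ h g => ?_, ?_,
    fun _ _ _ _ _ _ => rfl⟩
  · rintro _ i j w g hw rfl hj
    have lead := H.hasLeadingTerms w.length
    have hXX := H.gen_gen_eq_of_agree hw hj (hX w.length j)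
      (hX_sorted j _ g (hw.cons_orderedInsert hj))
    rw [hX (w.length + 1) i _ (mem g hw le_rfl), H.gen_of_lt _ i j w g hw rfl hj,
      hX w.length i _ (mem g hw.of_cons le_rfl), hXX]
    simp only [lowOp_apply, hT w.length _ _ (mem g hw.of_cons le_rfl),
      hX w.length _ _ (lead.group w hw.of_cons le_rfl _ g)]
  · exact (hT 0 h _ (mem g isSorted_nil le_rfl)).trans (H.group_nil _ h g)
  · rintro _ h j w g hw rfl
    have lead := H.hasLeadingTerms w.length
    rw [hT (w.length + 1) h _ (mem g hw le_rfl), H.group_cons _ h j w g hw rfl]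
    simp only [hT w.length _ _ (mem g hw.of_cons le_rfl),
      hX w.length _ _ (lead.group w hw.of_cons le_rfl h g)]

theorem exists_isPBWAction : ∃ X T, IsPBWAction q rho κ X T (pbwMonomial k n G) :=
  ⟨_, _, (isApproxAction_approxOps q rho κ).isPBWAction_wordwiseLimit⟩

end Construction

section Backward

/-- The standing assumptions on the parameters: `q` defines a quantum symmetric algebra, `rho` is
the matrix of an action of `G` on `V` which extends to `S_q(V)`, as expressed by `minor`, and `κ` is
quantum antisymmetric. -/
structure IsOrbifoldDatum {k : Type*} [Field k] {n : ℕ} {G : Type*} [Group G]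
    (q : Fin n → Fin n → k) (rho : G → Fin n → Fin n → k)
    (κ : Fin n → Fin n → LowDegree k n G) : Prop where
  diag : ∀ i, q i i = 1
  mul_swap : ∀ i j, q i j * q j i = 1
  one : ∀ i j, rho 1 i j = if i = j then 1 else 0
  mul : ∀ g h i j, rho (g * h) i j = ∑ l, rho g i l * rho h l j
  minor : ∀ i j h, IsQuadRel q (minor q rho i j h)
  antisymm : ∀ i j, κ i j = -(q i j) • κ j i

variable {k : Type*} [Field k] {n : ℕ} {G : Type*} [Group G] [Fintype G]
  {M : Type*} [AddCommGroup M] [Module k M]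
  {q : Fin n → Fin n → k} {rho : G → Fin n → Fin n → k} {κ : Fin n → Fin n → LowDegree k n G}
  {X : Fin n → Module.End k M} {T : G → Module.End k M} {b : List (Fin n) → G → M}

lemma IsOrbifoldDatum.gen_gen_of_forall_lt [NeZero (2 : k)] (D : IsOrbifoldDatum q rho κ) {z : M}
    (h : ∀ i j, j < i → X i (X j z) = q i j • X j (X i z) + lowOp X T (κ i j) z) (i j : Fin n) :
    X i (X j z) = q i j • X j (X i z) + lowOp X T (κ i j) z := by
  have antisymm : lowOp X T (κ i j) z = -(q i j • lowOp X T (κ j i) z) := by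
    rw [lowOp_antisymm D.antisymm]
    rfl
  rcases lt_trichotomy j i with hij | rfl | hij
  · exact h i j hij
  · rw [D.diag, one_smul] at antisymm ⊢
    have double : (2 : k) • lowOp X T (κ j j) z = 0 := by
      rw [two_smul, ← eq_neg_iff_add_eq_zero, ← antisymm]
    rw [(smul_eq_zero_iff_right two_ne_zero).1 double, add_zero]
  · rw [h j i hij, antisymm, smul_add, smul_smul, D.mul_swap, one_smul, add_neg_cancel_right]

lemma gen_gen_gen_of_braidedJacobi_eq_zero {y : M} (hy : y ∈ relationSubmodule X T q rho κ)
    {i j l : Fin n}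
    (hil : X i (X l (X j y)) = q i l • X l (X i (X j y)) + lowOp X T (κ i l) (X j y))
    (hjl : X j (X l (X i y)) = q j l • X l (X j (X i y)) + lowOp X T (κ j l) (X i y))
    (hJ : braidedJacobi q (fun i a b => X i (lowOp X T (κ a b) y))
      (fun i a b => lowOp X T (κ a b) (X i y)) l j i = 0) :
    X i (X j (X l y)) = q i j • X j (X i (X l y)) + lowOp X T (κ i j) (X l y) := by
  rw [gen_gen_of_mem hy j l, gen_gen_of_mem hy i l]
  simp only [map_add, map_smul]
  rw [hil, hjl, gen_gen_of_mem hy i j, ← sub_eq_zero, ← hJ, braidedJacobi]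
  simp only [map_add, map_smul]
  module

lemma group_gen_gen_of_minor {y : M} (hy : y ∈ relationSubmodule X T q rho κ) {i j : Fin n} {h : G}
    (hji : T h (X i (X j y)) = ∑ a, rho h a i • X a (T h (X j y)))
    (hK : T h (lowOp X T (κ j i) y) = ∑ a, ∑ b, minor q rho i j h a b • X a (X b (T h y))) :
    T h (X j (X i y)) = ∑ a, rho h a j • X a (T h (X i y)) := by
  rw [gen_gen_of_mem hy j i, map_add, map_smul, hji, hK]
  simp only [group_gen_of_mem hy, map_sum, map_smul, Finset.smul_sum, ← Finset.sum_add_distrib]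
  refine Finset.sum_congr rfl fun a _ => Finset.sum_congr rfl fun c _ => ?_
  rw [minor]
  module

lemma group_group_gen_of_mem (hmul : ∀ g h i j, rho (g * h) i j = ∑ l, rho g i l * rho h l j)
    {y : M} (hy : y ∈ relationSubmodule X T q rho κ)
    (hTy : ∀ g, T g y ∈ relationSubmodule X T q rho κ) (g h : G) (i : Fin n) :
    T g (T h (X i y)) = T (g * h) (X i y) := by
  rw [group_gen_of_mem hy, map_sum]
  simp only [map_smul, group_gen_of_mem (hTy _), group_gen_of_mem hy, group_group_of_mem hy, hmul,
    Finset.smul_sum, Finset.sum_smul]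
  rw [Finset.sum_comm]
  simp only [smul_smul, mul_comm]

lemma OverlapsResolve.braidedJacobi_eq_zero [NeZero (2 : k)] (R : OverlapsResolve q rho κ) {y : M}
    (hy : y ∈ relationSubmodule X T q rho κ) (hTy : ∀ g, T g y ∈ relationSubmodule X T q rho κ)
    {i j m : Fin n} (hij : i ≠ j) (him : i ≠ m) (hjm : j ≠ m) :
    braidedJacobi q (fun i a b => X i (lowOp X T (κ a b) y))
      (fun i a b => lowOp X T (κ a b) (X i y)) i j m = 0 := by
  have double := two_smul_quadOp hy hTy (R.quad i j m hij him hjm)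
  rw [R.low i j m hij him hjm, map_zero, LinearMap.zero_apply, quadOp_overlap hy] at double
  exact (smul_eq_zero_iff_right two_ne_zero).1 double

lemma OverlapsResolve.group_lowOp [NeZero (2 : k)] (R : OverlapsResolve q rho κ)
    (D : IsOrbifoldDatum q rho κ) {y : M} (hy : y ∈ relationSubmodule X T q rho κ)
    (hTy : ∀ g, T g y ∈ relationSubmodule X T q rho κ) {i j : Fin n} (hij : i < j) (h : G) :
    T h (lowOp X T (κ j i) y) = ∑ a, ∑ b, minor q rho i j h a b • X a (X b (T h y)) := by
  have double := two_smul_group_relation hy hTy (D.minor i j h)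
  rw [R.group_gen_gen h i j hij, sub_self, map_zero, LinearMap.zero_apply] at double
  exact sub_eq_zero.1 ((smul_eq_zero_iff_right two_ne_zero).1 double)

namespace IsPBWAction

lemma gen_gen_of_lt (H : IsPBWAction q rho κ X T b) {i j : Fin n} {w : List (Fin n)}
    (hw : IsSorted (j :: w)) (hj : j < i) (g : G) :
    X i (X j (b w g)) = q i j • X j (X i (b w g)) + lowOp X T (κ i j) (b w g) := by
  rw [← H.gen_of_lt _ i j w g hw rfl hj, H.gen_of_isSorted 0 j w g hw]

lemma group_gen (H : IsPBWAction q rho κ X T b) (h : G) {i : Fin n} {w : List (Fin n)}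
    (hw : IsSorted (i :: w)) (g : G) :
    T h (X i (b w g)) = ∑ l, rho h l i • X l (T h (b w g)) := by
  rw [← H.group_cons _ h i w g hw rfl, H.gen_of_isSorted 0 i w g hw]

lemma gen_mem_of_orderedInsert_mem (H : IsPBWAction q rho κ X T b) {w : List (Fin n)}
    (hw : IsSorted w) {N : Submodule k M} (hN : wordFiltration k b w.length ≤ N) {i : Fin n} {g : G}
    (hi : b (w.orderedInsert (· ≤ ·) i) g ∈ N) : X i (b w g) ∈ N := by
  obtain ⟨c, hc⟩ := (H.hasLeadingTerms w.length).gen w hw le_rfl i g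
  exact (Submodule.sub_mem_iff_left _ (Submodule.smul_mem _ c hi)).1 (hN hc)

variable {l : Fin n} {w : List (Fin n)}

lemma gen_gen_gen_of_lt (H : IsPBWAction q rho κ X T b)
    (ih : wordFiltration k b w.length ≤ relationSubmodule X T q rho κ) (hw : IsSorted (l :: w))
    {i j : Fin n} (hi : l < i) (hj : l < j) (g : G) :
    X i (X l (X j (b w g))) =
      q i l • X l (X i (X j (b w g))) + lowOp X T (κ i l) (X j (b w g)) :=
  H.gen_mem_of_orderedInsert_mem hw.of_cons
    (N := LinearMap.eqLocus (X i * X l) (q i l • (X l * X i) + lowOp X T (κ i l)))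
    (fun _ hx => gen_gen_of_mem (ih hx) i l)
    (H.gen_gen_of_lt (hw.cons_orderedInsert hj) hi g)

lemma group_gen_gen_of_lt (H : IsPBWAction q rho κ X T b)
    (ih : wordFiltration k b w.length ≤ relationSubmodule X T q rho κ) (hw : IsSorted (l :: w))
    (h : G) {i : Fin n} (hi : l < i) (g : G) :
    T h (X l (X i (b w g))) = ∑ a, rho h a l • X a (T h (X i (b w g))) := by
  have mem : X i (b w g) ∈ LinearMap.eqLocus (T h * X l) (∑ a, rho h a l • (X a * T h)) :=
    H.gen_mem_of_orderedInsert_mem hw.of_cons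
      (fun x hx => by simpa [LinearMap.sum_apply] using group_gen_of_mem (ih hx) h l)
      (by simpa [LinearMap.sum_apply] using H.group_gen h (hw.cons_orderedInsert hi) g)
  simpa [LinearMap.sum_apply] using mem

lemma cons_mem_relationSubmodule [NeZero (2 : k)] (H : IsPBWAction q rho κ X T b)
    (D : IsOrbifoldDatum q rho κ) (R : OverlapsResolve q rho κ)
    (ih : wordFiltration k b w.length ≤ relationSubmodule X T q rho κ) (hw : IsSorted (l :: w))
    (g : G) : b (l :: w) g ∈ relationSubmodule X T q rho κ := by
  have mem := mem_wordFiltration (k := k) b hw.of_cons le_rfl g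
  have hy := ih mem
  have hTy := fun h => ih ((H.hasLeadingTerms w.length).group_mem le_rfl h mem)
  have head : b (l :: w) g = X l (b w g) := (H.gen_of_isSorted 0 l w g hw).symm
  refine mem_relationSubmodule.2 ⟨D.gen_gen_of_forall_lt fun i j hij => ?_, fun h i => ?_,
    fun g' h => ?_⟩
  · rcases hw.cons_or_exists_head_lt j with hs | ⟨_, _, ⟨⟩, hj⟩
    · exact H.gen_gen_of_lt hs hij g
    · rw [head]
      exact gen_gen_gen_of_braidedJacobi_eq_zero hy
        (H.gen_gen_gen_of_lt ih hw (hj.trans hij) hj g)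
        (H.gen_gen_gen_of_lt ih hw hj (hj.trans hij) g)
        (R.braidedJacobi_eq_zero hy hTy hj.ne (hj.trans hij).ne hij.ne)
  · rcases hw.cons_or_exists_head_lt i with hs | ⟨_, _, ⟨⟩, hi⟩
    · exact H.group_gen h hs g
    · rw [head]
      exact group_gen_gen_of_minor hy (H.group_gen_gen_of_lt ih hw h hi g)
        (R.group_lowOp D hy hTy hi h)
  · rw [head]
    exact group_group_gen_of_mem D.mul hy hTy g' h l

theorem wordFiltration_le_relationSubmodule [NeZero (2 : k)] (H : IsPBWAction q rho κ X T b)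
    (D : IsOrbifoldDatum q rho κ) (R : OverlapsResolve q rho κ) (d : ℕ) :
    wordFiltration k b d ≤ relationSubmodule X T q rho κ := by
  induction d with
  | zero =>
    refine wordFiltration_le fun w _ hl g => ?_
    obtain rfl := List.length_eq_zero_iff.1 (Nat.le_zero.1 hl)
    refine mem_relationSubmodule.2 ⟨D.gen_gen_of_forall_lt fun i j hij =>
      H.gen_gen_of_lt (isSorted_singleton _) hij g, fun h i =>
      H.group_gen h (isSorted_singleton _) g, fun g' h => ?_⟩
    simp only [H.group_nil 0, mul_assoc]
  | succ d ih =>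
    refine wordFiltration_le fun w hw hl g => ?_
    rcases Nat.le_succ_iff.1 hl with hd | hd
    · exact ih (mem_wordFiltration b hw hd g)
    · obtain ⟨l, w, rfl⟩ := List.exists_cons_of_length_eq_add_one hd
      obtain rfl : w.length = d := Nat.succ.inj hd
      exact H.cons_mem_relationSubmodule D R ih hw g

end IsPBWAction

end Backward

section Forward

variable {k : Type*} [Field k] {n : ℕ} {G : Type*} {M : Type*} [AddCommGroup M] [Module k M]

/-- The vectors obtained from `y` by applying the PBW monomials `v_{i₁} ⋯ v_{iᵣ} g`. -/
def pbwFamily (X : Fin n → Module.End k M) (T : G → Module.End k M) (y : M)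
    (p : {w : List (Fin n) // IsSorted w} × G) : M :=
  (p.1.1.map X).prod (T p.2 y)

lemma exists_coord_of_linearIndependent {ι : Type*} {v : ι → M} (hv : LinearIndependent k v)
    (p : ι) : ∃ φ : M →ₗ[k] k, φ (v p) = 1 ∧ ∀ p', p' ≠ p → φ (v p') = 0 := by
  obtain ⟨Φ, hΦ⟩ := LinearMap.exists_leftInverse_of_injective (Finsupp.linearCombination k v)
    (LinearMap.ker_eq_bot.2 hv)
  have coord : ∀ p', Φ (v p') = Finsupp.single p' 1 := fun p' => by
    simpa using LinearMap.congr_fun hΦ (Finsupp.single p' (1 : k))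
  refine ⟨Finsupp.lapply p ∘ₗ Φ, by simp [coord], fun p' hp => ?_⟩
  simp [coord, Finsupp.single_eq_of_ne' hp]

lemma isSorted_pair {i j : Fin n} (h : i ≤ j) : IsSorted [i, j] :=
  (isSorted_singleton j).cons_cons h

variable {X : Fin n → Module.End k M} {T : G → Module.End k M} {y : M}

lemma exists_coord_of_word (hli : LinearIndependent k (pbwFamily X T y)) {w : List (Fin n)}
    (hw : IsSorted w) (g : G) : ∃ φ : M →ₗ[k] k, φ ((w.map X).prod (T g y)) = 1 ∧
      ∀ w' g', IsSorted w' → (w', g') ≠ (w, g) → φ ((w'.map X).prod (T g' y)) = 0 := by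
  obtain ⟨φ, hφ, hφ'⟩ := exists_coord_of_linearIndependent hli (⟨w, hw⟩, g)
  exact ⟨φ, hφ, fun w' g' hw' hne => hφ' (⟨w', hw'⟩, g') fun h => hne (by simpa using h)⟩

variable [Fintype G]

lemma eq_zero_of_lowOp_eq_zero (hli : LinearIndependent k (pbwFamily X T y))
    {p : LowDegree k n G} (hp : lowOp X T p y = 0) : p = 0 := by
  rw [lowOp_apply] at hp
  ext g
  · obtain ⟨φ, hφ, hφ'⟩ := exists_coord_of_word hli isSorted_nil g
    have hT : ∀ h, h ≠ g → φ (T h y) = 0 := fun h hne => hφ' [] h isSorted_nil (by simpa using hne)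
    have hX : ∀ h l, φ (X l (T h y)) = 0 := fun h l => by
      simpa using hφ' [l] h (isSorted_singleton l) (by simp)
    have value := congrArg φ hp
    simp only [map_sum, map_add, map_smul, hX, smul_zero, Finset.sum_const_zero, add_zero] at value
    rw [Fintype.sum_eq_single g fun h hne => by rw [hT h hne, smul_zero]] at value
    simpa [show φ (T g y) = 1 from hφ] using value
  · rename_i l
    obtain ⟨φ, hφ, hφ'⟩ := exists_coord_of_word hli (isSorted_singleton l) g
    have hT : ∀ h, φ (T h y) = 0 := fun h => hφ' [] h isSorted_nil (by simp)
    have hX : ∀ h m, (m, h) ≠ (l, g) → φ (X m (T h y)) = 0 := fun h m hne => by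
      simpa using hφ' [m] h (isSorted_singleton m) (by simpa using hne)
    have value := congrArg φ hp
    simp only [map_sum, map_add, map_smul, hT, smul_zero, zero_add] at value
    rw [Fintype.sum_eq_single g fun h hne => Finset.sum_eq_zero fun m _ => by
        rw [hX h m (by simp [hne]), smul_zero],
      Fintype.sum_eq_single l fun m hne => by rw [hX g m (by simp [hne]), smul_zero]] at value
    simpa [show φ (X l (T g y)) = 1 by simpa using hφ] using value

lemma apply_quadOp_of_apply_lowOp_eq_zero {φ : M →ₗ[k] k} (hφ : ∀ p, φ (lowOp X T p y) = 0)
    (P : HighDegree k n G) : φ (quadOp X T P y) =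
      ∑ x : G × Fin n × Fin n, P.1 x.1 x.2.1 x.2.2 * φ (X x.2.1 (X x.2.2 (T x.1 y))) := by
  have split : quadOp X T P y =
      (∑ g, ∑ a, ∑ b, P.1 g a b • X a (X b (T g y))) + lowOp X T (0, P.2) y := by
    simp [quadOp_apply, lowOp_apply, Finset.sum_add_distrib]
  simp [split, hφ, Fintype.sum_prod_type]

variable [Group G] {q : Fin n → Fin n → k} {rho : G → Fin n → Fin n → k}
  {κ : Fin n → Fin n → LowDegree k n G}

lemma exists_coord_of_pair (hli : LinearIndependent k (pbwFamily X T y))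
    (hrel : relationSubmodule X T q rho κ = ⊤) {a b : Fin n} (hab : a ≤ b) (g : G) :
    ∃ φ : M →ₗ[k] k, (∀ p, φ (lowOp X T p y) = 0) ∧ φ (X a (X b (T g y))) = 1 ∧
      ∀ h c d, (h, c, d) ≠ (g, a, b) → (h, c, d) ≠ (g, b, a) → φ (X c (X d (T h y))) = 0 := by
  obtain ⟨φ, hφ, hφ'⟩ := exists_coord_of_word hli (isSorted_pair hab) g
  have mem : ∀ z, z ∈ relationSubmodule X T q rho κ := fun z => hrel ▸ Submodule.mem_top
  have hlow : ∀ p, φ (lowOp X T p y) = 0 := fun p => by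
    have hT : ∀ h, φ (T h y) = 0 := fun h => hφ' [] h isSorted_nil (by simp)
    have hX : ∀ h l, φ (X l (T h y)) = 0 := fun h l => by
      simpa using hφ' [l] h (isSorted_singleton l) (by simp)
    simp [lowOp_apply, hT, hX]
  have hle : ∀ h c d, c ≤ d → (h, c, d) ≠ (g, a, b) → φ (X c (X d (T h y))) = 0 :=
    fun h c d hcd hne => by
      simpa using hφ' [c, d] h (isSorted_pair hcd) fun heq => hne (by simp_all)
  refine ⟨φ, hlow, by simpa using hφ, fun h c d hne hne' => ?_⟩
  rcases le_or_gt c d with hcd | hcd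
  · exact hle h c d hcd hne
  · rw [gen_gen_of_mem (mem _) c d, map_add, map_smul, lowOp_group_of_mem (mem y), hlow,
      hle h d c hcd.le fun heq => hne' (by simp_all), smul_zero, add_zero]

lemma isQuadRel_of_quadOp_eq_zero (hq : ∀ i j, q i j * q j i = 1)
    (hli : LinearIndependent k (pbwFamily X T y)) (hrel : relationSubmodule X T q rho κ = ⊤)
    {P : HighDegree k n G} (hP : quadOp X T P y = 0) (g : G) : IsQuadRel q (P.1 g) := by
  have mem : ∀ z, z ∈ relationSubmodule X T q rho κ := fun z => hrel ▸ Submodule.mem_top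
  have coord_sum : ∀ φ : M →ₗ[k] k, (∀ p, φ (lowOp X T p y) = 0) →
      ∑ x : G × Fin n × Fin n, P.1 x.1 x.2.1 x.2.2 * φ (X x.2.1 (X x.2.2 (T x.1 y))) = 0 :=
    fun φ hlow => by rw [← apply_quadOp_of_apply_lowOp_eq_zero hlow, hP, map_zero]
  have diagonal : ∀ a, P.1 g a a = 0 := by
    intro a
    obtain ⟨φ, hlow, hφ, hφ'⟩ := exists_coord_of_pair hli hrel le_rfl g
    have value := coord_sum φ hlow
    rw [Fintype.sum_eq_single (g, a, a) fun x hx => by rw [hφ' _ _ _ hx hx, mul_zero]] at value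
    simpa [hφ] using value
  have ordered : ∀ a b, a < b → P.1 g a b + q b a * P.1 g b a = 0 := by
    intro a b hab
    obtain ⟨φ, hlow, hφ, hφ'⟩ := exists_coord_of_pair hli hrel hab.le g
    have hba : φ (X b (X a (T g y))) = q b a := by
      rw [gen_gen_of_mem (mem _) b a, map_add, map_smul, lowOp_group_of_mem (mem y), hlow, hφ,
        smul_eq_mul, mul_one, add_zero]
    have value := coord_sum φ hlow
    rw [Fintype.sum_eq_add (g, a, b) (g, b, a) (by simp [hab.ne])
      fun x hx => by rw [hφ' _ _ _ hx.1 hx.2, mul_zero]] at value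
    simpa [hφ, hba, mul_comm] using value
  intro a b
  rcases lt_trichotomy a b with h | rfl | h
  · exact ordered a b h
  · rw [diagonal, mul_zero, add_zero]
  · linear_combination q b a * ordered b a h - P.1 g a b * hq b a

lemma braidedJacobi_eq_zero_of_relationSubmodule_eq_top
    (hrel : relationSubmodule X T q rho κ = ⊤) (i j m : Fin n) :
    braidedJacobi q (fun i a b => X i (lowOp X T (κ a b) y))
      (fun i a b => lowOp X T (κ a b) (X i y)) i j m = 0 := by
  have hκ : ∀ a b z, lowOp X T (κ a b) z = X a (X b z) - q a b • X b (X a z) := fun a b z =>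
    eq_sub_of_add_eq' (gen_gen_of_mem (hrel ▸ Submodule.mem_top) a b).symm
  simp only [braidedJacobi, hκ, map_sub, map_smul]
  module

lemma group_lowOp_of_relationSubmodule_eq_top
    (hrel : relationSubmodule X T q rho κ = ⊤) (i j : Fin n) (h : G) :
    T h (lowOp X T (κ j i) y) = ∑ a, ∑ b, minor q rho i j h a b • X a (X b (T h y)) := by
  have mem : ∀ z, z ∈ relationSubmodule X T q rho κ := fun z => hrel ▸ Submodule.mem_top
  rw [eq_sub_of_add_eq' (gen_gen_of_mem (mem y) j i).symm]
  simp only [map_sub, map_smul, map_sum, group_gen_of_mem (mem _), Finset.smul_sum,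
    ← Finset.sum_sub_distrib]
  refine Finset.sum_congr rfl fun a _ => Finset.sum_congr rfl fun b _ => ?_
  rw [minor]
  module

theorem IsOrbifoldDatum.overlapsResolve (D : IsOrbifoldDatum q rho κ)
    (hli : LinearIndependent k (pbwFamily X T y)) (hrel : relationSubmodule X T q rho κ = ⊤) :
    OverlapsResolve q rho κ := by
  have mem : ∀ z, z ∈ relationSubmodule X T q rho κ := fun z => hrel ▸ Submodule.mem_top
  have overlap_eq_zero : ∀ i j m, quadOp X T (overlap q rho κ i j m) y = 0 := fun i j m => by
    rw [quadOp_overlap (mem y), braidedJacobi_eq_zero_of_relationSubmodule_eq_top hrel]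
  have quad : ∀ i j m g, IsQuadRel q ((overlap q rho κ i j m).1 g) := fun i j m =>
    isQuadRel_of_quadOp_eq_zero D.mul_swap hli hrel (overlap_eq_zero i j m)
  refine ⟨fun h i j _ => ?_, fun i j m _ _ _ => quad i j m, fun i j m _ _ _ => ?_⟩
  · refine sub_eq_zero.1 (eq_zero_of_lowOp_eq_zero hli ?_)
    rw [← two_smul_group_relation (mem y) (fun g => mem _) (D.minor i j h),
      group_lowOp_of_relationSubmodule_eq_top hrel, sub_self, smul_zero]
  · refine eq_zero_of_lowOp_eq_zero hli ?_
    rw [← two_smul_quadOp (mem y) (fun g => mem _) (quad i j m), overlap_eq_zero, smul_zero]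

end Forward

section Model

variable {k : Type*} [Field k] {n : ℕ} {G : Type*} [Group G] [Fintype G]
  {M : Type*} [AddCommGroup M] [Module k M]
  {q : Fin n → Fin n → k} {rho : G → Fin n → Fin n → k} {κ : Fin n → Fin n → LowDegree k n G}
  {X : Fin n → Module.End k M} {T : G → Module.End k M} {b : List (Fin n) → G → M}
  {w : List (Fin n)}

lemma IsPBWAction.prod_apply (H : IsPBWAction q rho κ X T b) (hw : IsSorted w) (g : G) :
    (w.map X).prod (T g (b [] 1)) = b w g := by
  induction w with
  | nil => simpa using H.group_nil 0 g 1
  | cons j w ih =>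
    rw [List.map_cons, List.prod_cons, Module.End.mul_apply, ih hw.of_cons]
    exact H.gen_of_isSorted 0 j w g hw

lemma IsPBWAction.group_one_apply (H : IsPBWAction q rho κ X T b) (D : IsOrbifoldDatum q rho κ)
    (hw : IsSorted w) (g : G) : T 1 (b w g) = b w g := by
  induction w with
  | nil => exact (H.group_nil 0 1 g).trans (by rw [one_mul])
  | cons j w ih =>
    rw [H.group_cons w.length 1 j w g hw rfl, ih hw.of_cons]
    simp [D.one, H.gen_of_isSorted 0 j w g hw]

theorem OverlapsResolve.exists_operators [NeZero (2 : k)] (R : OverlapsResolve q rho κ)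
    (D : IsOrbifoldDatum q rho κ) :
    ∃ (X : Fin n → Module.End k (PBWSpace k n G)) (T : G → Module.End k (PBWSpace k n G))
      (y : PBWSpace k n G), relationSubmodule X T q rho κ = ⊤ ∧ T 1 = 1 ∧
        LinearIndependent k (pbwFamily X T y) := by
  obtain ⟨X, T, H⟩ := exists_isPBWAction q rho κ
  refine ⟨X, T, pbwMonomial k n G [] 1, ?_, ?_, ?_⟩
  · exact eq_top_of_pbwMonomial_mem fun w hw g =>
      H.wordFiltration_le_relationSubmodule D R w.length (mem_wordFiltration _ hw le_rfl g)
  · have fixed : LinearMap.eqLocus (T 1) 1 = ⊤ :=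
      eq_top_of_pbwMonomial_mem fun w hw g => H.group_one_apply D hw g
    exact LinearMap.eqLocus_eq_top.1 fixed
  · have family : pbwFamily X T (pbwMonomial k n G [] 1) = fun p => Finsupp.single p 1 :=
      funext fun p => (H.prod_apply p.1.2 p.2).trans (pbwMonomial_of_isSorted p.1.2 p.2)
    rw [family]
    exact Finsupp.linearIndependent_single_one k _

end Model

section QuantumSymmetricAlgebra

variable {k : Type*} [Field k] {n : ℕ} {q e : Fin n → Fin n → k}

lemma vS_mul_vS (a b : Fin n) : vS k n q a * vS k n q b = q a b • (vS k n q b * vS k n q a) := by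
  have h : RingQuot.mkAlgHom k (relS k n q) (FreeAlgebra.ι k a * FreeAlgebra.ι k b) =
      RingQuot.mkAlgHom k (relS k n q) (q a b • (FreeAlgebra.ι k b * FreeAlgebra.ι k a)) :=
    RingQuot.mkAlgHom_rel k ⟨a, b, rfl, rfl⟩
  rw [map_mul, map_smul, map_mul] at h
  exact h

lemma exists_algHom_vS {A : Type*} [Ring A] [Algebra k A] {v : Fin n → A}
    (hv : ∀ a b, v a * v b = q a b • (v b * v a)) :
    ∃ F : Sq k n q →ₐ[k] A, ∀ a, F (vS k n q a) = v a := by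
  have hrel : ∀ ⦃x y⦄, relS k n q x y → FreeAlgebra.lift k v x = FreeAlgebra.lift k v y := by
    rintro _ _ ⟨a, b, rfl, rfl⟩
    simp [hv a b]
  exact ⟨RingQuot.liftAlgHom k ⟨FreeAlgebra.lift k v, hrel⟩, fun a =>
    (RingQuot.liftAlgHom_mkAlgHom_apply k _ hrel _).trans (FreeAlgebra.lift_ι_apply v a)⟩

lemma IsQuadRel.sum_smul_mul_eq_zero [NeZero (2 : k)] (he : IsQuadRel q e) {A : Type*} [Ring A]
    [Algebra k A] {v : Fin n → A} (hv : ∀ a b, v a * v b = q a b • (v b * v a)) :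
    ∑ a, ∑ b, e a b • (v a * v b) = 0 := by
  have double := two_smul_sum_gen_gen (X := fun a => LinearMap.mulLeft k (v a)) (T := 0) (κ := 0)
    (rho := (0 : Unit → _)) (z := (1 : A)) (mem_relationSubmodule.2 (by simpa using hv)) he
  simpa [smul_eq_zero_iff_right (two_ne_zero (α := k))] using double

lemma isOrbifoldDatum_trivial (hq_diag : ∀ i, q i i = 1) (hq_inv : ∀ i j, q i j * q j i = 1) :
    IsOrbifoldDatum q (fun (_ : Unit) i j => if i = j then 1 else 0) 0 where
  diag := hq_diag
  mul_swap := hq_inv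
  one _ _ := rfl
  mul _ _ i j := by simp
  minor i j h a b := by
    simp only [minor]
    split_ifs <;> grind
  antisymm := by simp

lemma overlapsResolve_zero {G : Type*} [Group G] [Fintype G] (rho : G → Fin n → Fin n → k) :
    OverlapsResolve q rho 0 := by
  have left : ∀ h : G, leftTranslate rho h 0 = 0 := fun h => by ext <;> simp [leftTranslate]
  have right : ∀ h : G, rightTranslate h (0 : LowDegree k n G) = 0 := fun h => rfl
  have overlap_eq : ∀ i j m, overlap q rho 0 i j m = 0 := fun i j m => by
    ext <;> simp [overlap, braidedJacobi, leftMulGen, rightMulGen]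
  constructor <;> intros <;> simp [left, right, overlap_eq, doubleReduce, IsQuadRel]

theorem sum_smul_vS_mul_vS_eq_zero_iff [NeZero (2 : k)] (hq_diag : ∀ i, q i i = 1)
    (hq_inv : ∀ i j, q i j * q j i = 1) :
    ∑ a, ∑ b, e a b • (vS k n q a * vS k n q b) = 0 ↔ IsQuadRel q e := by
  refine ⟨fun h => ?_, fun he => he.sum_smul_mul_eq_zero vS_mul_vS⟩
  obtain ⟨X, T, y, hrel, hone, hli⟩ := (overlapsResolve_zero (q := q) _).exists_operators
    (isOrbifoldDatum_trivial hq_diag hq_inv)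
  have hX : ∀ a b, X a * X b = q a b • (X b * X a) := fun a b => LinearMap.ext fun z => by
    have hz := gen_gen_of_mem (hrel ▸ Submodule.mem_top : z ∈ relationSubmodule X T q _ 0) a b
    simpa using hz
  obtain ⟨F, hF⟩ := exists_algHom_vS (A := Module.End k (PBWSpace k n Unit)) hX
  refine isQuadRel_of_quadOp_eq_zero hq_inv hli hrel (P := (fun _ => e, 0)) ?_ ()
  have relation := congrArg (fun f => F f y) h
  simpa [quadOp_apply, hF, hone, PUnit.default_eq_unit] using relation

variable {G : Type*} {rho : G → Fin n → Fin n → k}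

lemma sum_minor_smul_mul_eq_zero {A : Type*} [Ring A] [Algebra k A] {v : Fin n → A}
    (hv : ∀ a b, v a * v b = q a b • (v b * v a)) {h : G} {f : A →ₐ[k] A}
    (hf : ∀ i, f (v i) = ∑ l, rho h l i • v l) (i j : Fin n) :
    ∑ a, ∑ b, minor q rho i j h a b • (v a * v b) = 0 := by
  have image := congrArg f (hv j i)
  simp only [map_mul, map_smul, hf, Finset.sum_mul_sum, smul_mul_smul_comm, Finset.smul_sum,
    smul_smul, ← mul_assoc] at image
  simp only [minor, sub_smul, Finset.sum_sub_distrib]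
  rw [sub_eq_zero, image]

lemma isQuadRel_minor [NeZero (2 : k)] (hq_diag : ∀ i, q i i = 1)
    (hq_inv : ∀ i j, q i j * q j i = 1) {h : G} {f : Sq k n q →ₐ[k] Sq k n q}
    (hf : ∀ i, f (vS k n q i) = ∑ l, rho h l i • vS k n q l) (i j : Fin n) :
    IsQuadRel q (minor q rho i j h) :=
  (sum_smul_vS_mul_vS_eq_zero_iff hq_diag hq_inv).1 (sum_minor_smul_mul_eq_zero vS_mul_vS hf i j)

end QuantumSymmetricAlgebra

section Conditions

variable {k : Type*} [Field k] {n : ℕ} {G : Type*} {q : Fin n → Fin n → k}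

lemma IsQuadRel.sum_smul_eq [NeZero (2 : k)] {N : Type*} [AddCommGroup N] [Module k N]
    {e : Fin n → Fin n → k} (he : IsQuadRel q e) (hq_diag : ∀ i, q i i = 1)
    (hq_inv : ∀ i j, q i j * q j i = 1) {f : Fin n → Fin n → N}
    (hf : ∀ a b, f a b = -(q a b) • f b a) :
    ∑ a, ∑ b, e a b • f a b = (2 : k) • ∑ a, ∑ b, if a < b then e b a • f b a else 0 := by
  have diagonal : ∀ a, e a a = 0 := fun a => by
    have double : (2 : k) * e a a = 0 := by linear_combination he a a - e a a * hq_diag a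
    exact (mul_eq_zero_iff_left two_ne_zero).1 double
  have symm : ∀ a b, e a b • f a b = e b a • f b a := fun a b => by
    rw [hf a b, smul_smul]
    congr 1
    linear_combination (-q a b) * he a b + e b a * hq_inv a b
  have split : ∑ a, ∑ b, e a b • f a b = (∑ a, ∑ b, if a < b then e b a • f b a else 0) +
      ∑ a, ∑ b, if b < a then e a b • f a b else 0 := by
    simp only [← Finset.sum_add_distrib]
    refine Finset.sum_congr rfl fun a _ => Finset.sum_congr rfl fun b _ => ?_
    rcases lt_trichotomy a b with h | rfl | h
    · simp [h, h.not_gt, symm a b]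
    · simp [diagonal]
    · simp [h, h.not_gt]
  rw [split, two_smul, add_right_inj]
  exact Finset.sum_comm

/-- The bilinear form of conditions (3) and (4), where `F` and `F'` have the same meaning as in
`braidedJacobi`. -/
def cyclicJacobi {N : Type*} [AddCommGroup N] [Module k N] (q : Fin n → Fin n → k)
    (F F' : Fin n → Fin n → Fin n → N) (i j m : Fin n) : N :=
  (q i j * q i m) • F' i j m - F i j m + (q i m * q j m) • F' j m i - (q i j * q i m) • F j m i
    + F' m i j - (q i m * q j m) • F m i j

/-- The multiple of `overlap` occurring in conditions (3) and (4). -/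
def cyclicOverlap (q : Fin n → Fin n → k) (rho : G → Fin n → Fin n → k)
    (κ : Fin n → Fin n → LowDegree k n G) : Fin n → Fin n → Fin n → HighDegree k n G :=
  cyclicJacobi q (fun i a b => leftMulGen i (κ a b)) (fun i a b => rightMulGen rho i (κ a b))

lemma smul_braidedJacobi {N : Type*} [AddCommGroup N] [Module k N]
    (hq_inv : ∀ i j, q i j * q j i = 1) {F F' : Fin n → Fin n → Fin n → N}
    (hF : ∀ i a b, F i a b = -(q a b) • F i b a) (hF' : ∀ i a b, F' i a b = -(q a b) • F' i b a)
    (i j m : Fin n) :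
    (q i j * q i m * q j m) • braidedJacobi q F F' i j m = cyclicJacobi q F F' i j m := by
  have hij := hq_inv i j
  have him := hq_inv i m
  have hjm := hq_inv j m
  rw [braidedJacobi, cyclicJacobi, hF i m j, hF' i m j, hF m j i, hF' m j i]
  match_scalars <;> grind

variable {rho : G → Fin n → Fin n → k} {κ : Fin n → Fin n → LowDegree k n G}

lemma sum_overlap_smul_mul {A : Type*} [Ring A] [Algebra k A] (v : Fin n → A) (i j m : Fin n)
    (g : G) :
    ∑ a, ∑ b, (overlap q rho κ i j m).1 g a b • (v a * v b) =
      braidedJacobi q (fun i a b => v i * ∑ l, (κ a b).2 g l • v l)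
        (fun i a b => (∑ l, (κ a b).2 g l • v l) * ∑ l, rho g l i • v l) i j m := by
  have left : ∀ i (p : LowDegree k n G),
      ∑ a, ∑ b, (leftMulGen i p).1 g a b • (v a * v b) = v i * ∑ l, p.2 g l • v l := fun i p => by
    simp [leftMulGen, ev, Pi.single_apply, Finset.mul_sum]
  have right : ∀ i (p : LowDegree k n G),
      ∑ a, ∑ b, (rightMulGen rho i p).1 g a b • (v a * v b) =
        (∑ l, p.2 g l • v l) * ∑ l, rho g l i • v l := fun i p => by
    simp only [rightMulGen, Finset.sum_mul_sum, smul_mul_smul_comm]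
  simp only [overlap, braidedJacobi, ← left, ← right, Prod.fst_add, Prod.fst_sub, Prod.smul_fst,
    Pi.add_apply, Pi.sub_apply, Pi.smul_apply, smul_eq_mul, add_smul, sub_smul, mul_smul,
    Finset.sum_add_distrib, Finset.sum_sub_distrib, Finset.smul_sum]

variable [Group G]

/-- The map `κ` with components `κ^C` and `κ^L`. -/
def kappa (kapC : Fin n → Fin n → G → k) (kapL : Fin n → Fin n → G → Fin n → k)
    (i j : Fin n) : LowDegree k n G :=
  (kapC i j, kapL i j)

variable {kapC : Fin n → Fin n → G → k} {kapL : Fin n → Fin n → G → Fin n → k}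

lemma cond1_iff [NeZero (2 : k)] (D : IsOrbifoldDatum q rho (kappa kapC kapL)) :
    Cond1 k n G q rho kapC kapL ↔ ∀ (h : G) (i j : Fin n), i < j →
      (2 : k) • leftTranslate rho h (kappa kapC kapL j i) =
        ∑ a, ∑ b, minor q rho i j h a b • rightTranslate h (kappa kapC kapL a b) := by
  have antisymm : ∀ h a b, rightTranslate h (kappa kapC kapL a b) =
      -(q a b) • rightTranslate h (kappa kapC kapL b a) := fun h a b => by
    rw [D.antisymm a b]
    rfl
  have ordered : ∀ (h : G) (i j : Fin n), (2 : k) • leftTranslate rho h (kappa kapC kapL j i) =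
        ∑ a, ∑ b, minor q rho i j h a b • rightTranslate h (kappa kapC kapL a b) ↔
      leftTranslate rho h (kappa kapC kapL j i) = ∑ a, ∑ b, if a < b then
        minor q rho i j h b a • rightTranslate h (kappa kapC kapL b a) else 0 := fun h i j => by
    rw [(D.minor i j h).sum_smul_eq D.diag D.mul_swap (antisymm h),
      (smul_right_injective _ (two_ne_zero (α := k))).eq_iff]
  simp only [ordered]
  refine ⟨fun H h i j hij => Prod.ext (funext fun g => ?_) (funext₂ fun g m => ?_),
    fun H g h i j hij => ⟨?_, fun m => ?_⟩⟩
  · simpa [leftTranslate, rightTranslate, kappa, minor, Prod.fst_sum, Finset.sum_apply, ite_apply,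
      apply_ite, mul_assoc] using (H (h⁻¹ * g) h i j hij).1
  · simpa [leftTranslate, rightTranslate, kappa, minor, Prod.snd_sum, Finset.sum_apply, ite_apply,
      apply_ite, mul_assoc] using (H (h⁻¹ * g) h i j hij).2 m
  · simpa [leftTranslate, rightTranslate, kappa, minor, Prod.fst_sum, Finset.sum_apply, ite_apply,
      apply_ite, mul_assoc] using congr_fun (congr_arg Prod.fst (H h i j hij)) (h * g)
  · simpa [leftTranslate, rightTranslate, kappa, minor, Prod.snd_sum, Finset.sum_apply, ite_apply,
      apply_ite, mul_assoc] using congr_fun₂ (congr_arg Prod.snd (H h i j hij)) (h * g) m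

lemma cond2_iff [NeZero (2 : k)] (hq_diag : ∀ i, q i i = 1) (hq_inv : ∀ i j, q i j * q j i = 1) :
    Cond2 k n G q rho kapL ↔ ∀ i j m : Fin n, i ≠ j → i ≠ m → j ≠ m →
      ∀ g, IsQuadRel q ((overlap q rho (kappa kapC kapL) i j m).1 g) := by
  simp only [← sum_smul_vS_mul_vS_eq_zero_iff hq_diag hq_inv]
  have expand := sum_overlap_smul_mul (q := q) (rho := rho) (κ := kappa kapC kapL) (vS k n q)
  refine ⟨fun H i j m hij him hjm g => (expand i j m g).trans (H i j m g hij him hjm),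
    fun H i j m g hij him hjm => (expand i j m g).symm.trans (H i j m hij him hjm g)⟩

variable [Fintype G]

lemma doubleReduce_smul (c : k) (P : HighDegree k n G) :
    doubleReduce κ (c • P) = c • doubleReduce κ P := by
  simp [doubleReduce, Finset.smul_sum, smul_smul, mul_comm]

lemma doubleReduce_overlap_eq_zero_iff (hq_inv : ∀ i j, q i j * q j i = 1)
    (hκ : ∀ i j, κ i j = -(q i j) • κ j i) (i j m : Fin n) :
    doubleReduce κ (overlap q rho κ i j m) = 0 ↔
      doubleReduce κ (cyclicOverlap q rho κ i j m) = 0 := by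
  have hq : ∀ a b, q a b ≠ 0 := fun a b => left_ne_zero_of_mul_eq_one (hq_inv a b)
  rw [cyclicOverlap, ← smul_braidedJacobi hq_inv, doubleReduce_smul, smul_eq_zero_iff_right
    (mul_ne_zero (mul_ne_zero (hq i j) (hq i m)) (hq j m)), overlap]
  · intro i a b
    rw [hκ]
    ext <;> simp [leftMulGen, mul_left_comm]
  · intro i a b
    rw [hκ]
    ext <;> simp [rightMulGen, mul_assoc]

lemma doubleReduce_kappa_fst_apply (P : HighDegree k n G) (g : G) :
    (doubleReduce (kappa kapC kapL) P).1 g =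
      ∑ h, ∑ a, ∑ b, P.1 h a b * kapC a b (g * h⁻¹) := by
  simp [doubleReduce, rightTranslate, kappa, Prod.fst_sum, Finset.sum_apply]

lemma doubleReduce_kappa_snd_apply (P : HighDegree k n G) (g : G) (l : Fin n) :
    (doubleReduce (kappa kapC kapL) P).2 g l =
      (∑ h, ∑ a, ∑ b, P.1 h a b * kapL a b (g * h⁻¹) l) + 2 * P.2 g l := by
  simp [doubleReduce, rightTranslate, kappa, Prod.snd_sum, Finset.sum_apply]

lemma cond3_iff : Cond3 k n G q rho kapC kapL ↔ ∀ i j m : Fin n, i ≠ j → i ≠ m → j ≠ m →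
    (doubleReduce (kappa kapC kapL) (cyclicOverlap q rho (kappa kapC kapL) i j m)).2 = 0 := by
  have expand : ∀ i j m g l, (doubleReduce (kappa kapC kapL)
      (cyclicOverlap q rho (kappa kapC kapL) i j m)).2 g l = (∑ h, cyclicJacobi q
        (fun i a b => kapLbil k n kapL (g * h⁻¹) (ev k n i) (kapLv k n kapL h a b))
        (fun i a b => kapLbil k n kapL (g * h⁻¹) (kapLv k n kapL h a b) (gv k n rho h i))
          i j m) l - ((2 : k) • (kapC j m g • (ev k n i - (q i j * q i m) • gv k n rho g i)
        + kapC m i g • ((q i j * q i m) • ev k n j - (q i m * q j m) • gv k n rho g j)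
        + kapC i j g • ((q i m * q j m) • ev k n m - gv k n rho g m))) l :=
    fun i j m g l => by
    rw [doubleReduce_kappa_snd_apply, sub_eq_add_neg, Finset.sum_apply]
    congr 1
    · refine Finset.sum_congr rfl fun h _ => ?_
      simp only [cyclicOverlap, cyclicJacobi, leftMulGen, rightMulGen, kappa, kapLbil, kapLv, gv,
        Prod.fst_add, Prod.fst_sub, Prod.smul_fst, Pi.add_apply, Pi.sub_apply, Pi.smul_apply,
        smul_eq_mul, add_mul, sub_mul, Finset.sum_add_distrib, Finset.sum_sub_distrib,
        Finset.mul_sum, mul_assoc]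
    · simp only [cyclicOverlap, cyclicJacobi, leftMulGen, rightMulGen, kappa, gv, Prod.snd_add,
        Prod.snd_sub, Prod.smul_snd, Pi.add_apply, Pi.sub_apply, Pi.smul_apply, smul_eq_mul]
      ring
  simp only [funext_iff, expand, Pi.zero_apply, sub_eq_zero]
  exact ⟨fun H i j m hij him hjm g => congr_fun (H i j m g hij him hjm),
    fun H i j m g hij him hjm => funext (H i j m hij him hjm g)⟩

lemma cond4_iff : Cond4 k n G q rho kapC kapL ↔ ∀ i j m : Fin n, i ≠ j → i ≠ m → j ≠ m →
    (doubleReduce (kappa kapC kapL) (cyclicOverlap q rho (kappa kapC kapL) i j m)).1 = 0 := by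
  have expand : ∀ i j m g, (doubleReduce (kappa kapC kapL)
      (cyclicOverlap q rho (kappa kapC kapL) i j m)).1 g = ∑ h,
        cyclicJacobi q (fun i a b => kapCbil k n kapC (g * h⁻¹) (ev k n i) (kapLv k n kapL h a b))
          (fun i a b => kapCbil k n kapC (g * h⁻¹) (kapLv k n kapL h a b) (gv k n rho h i)) i j m :=
    fun i j m g => by
    rw [doubleReduce_kappa_fst_apply]
    refine Finset.sum_congr rfl fun h _ => ?_
    simp only [cyclicOverlap, cyclicJacobi, leftMulGen, rightMulGen, kappa, kapCbil, kapLv, gv,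
      Prod.fst_add, Prod.fst_sub, Prod.smul_fst, Pi.add_apply, Pi.sub_apply, Pi.smul_apply,
      smul_eq_mul, add_mul, sub_mul, Finset.sum_add_distrib, Finset.sum_sub_distrib,
      Finset.mul_sum, mul_assoc]
  simp only [funext_iff, expand]
  exact ⟨fun H i j m hij him hjm g => H i j m g hij him hjm,
    fun H i j m g hij him hjm => H i j m hij him hjm g⟩

lemma overlapsResolve_kappa_iff [NeZero (2 : k)] (D : IsOrbifoldDatum q rho (kappa kapC kapL)) :
    OverlapsResolve q rho (kappa kapC kapL) ↔ Cond1 k n G q rho kapC kapL ∧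
      Cond2 k n G q rho kapL ∧ Cond3 k n G q rho kapC kapL ∧ Cond4 k n G q rho kapC kapL := by
  rw [cond1_iff D, cond2_iff (kapC := kapC) D.diag D.mul_swap, cond3_iff, cond4_iff]
  have low := doubleReduce_overlap_eq_zero_iff (rho := rho) D.mul_swap D.antisymm
  refine ⟨fun R => ⟨R.group_gen_gen, R.quad, fun i j m hij him hjm => ?_,
    fun i j m hij him hjm => ?_⟩, fun ⟨group_gen_gen, quad, h₃, h₄⟩ =>
      ⟨group_gen_gen, quad, fun i j m hij him hjm => (low i j m).2 (Prod.ext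
        (h₄ i j m hij him hjm) (h₃ i j m hij him hjm))⟩⟩
  · exact congr_arg Prod.snd ((low i j m).1 (R.low i j m hij him hjm))
  · exact congr_arg Prod.fst ((low i j m).1 (R.low i j m hij him hjm))

end Conditions

section SortedWords

variable {n : ℕ}

/-- The sorted word in which each letter `i` occurs `m i` times. -/
def sortedWord (m : Fin n → ℕ) : List (Fin n) :=
  (List.finRange n).flatMap fun i => List.replicate (m i) i

lemma isSorted_sortedWord (m : Fin n → ℕ) : IsSorted (sortedWord m) := by
  refine List.pairwise_flatMap.2 ⟨fun i _ => List.pairwise_replicate.2 (Or.inr le_rfl),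
    (List.pairwise_lt_finRange n).imp fun hij a ha b hb => ?_⟩
  rw [List.eq_of_mem_replicate ha, List.eq_of_mem_replicate hb]
  exact hij.le

lemma count_sortedWord (m : Fin n → ℕ) (i : Fin n) : (sortedWord m).count i = m i := by
  rw [sortedWord, List.count_flatMap, ← Fin.sum_univ_def]
  simp [List.count_replicate]

lemma IsSorted.sortedWord_count {w : List (Fin n)} (hw : IsSorted w) :
    sortedWord (fun i => w.count i) = w :=
  (List.perm_iff_count.2 (count_sortedWord _)).eq_of_pairwise
    (fun _ _ _ _ => le_antisymm) (isSorted_sortedWord _) hw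

/-- Sorted words correspond to the exponents of the monomials `v₁^{m₁} ⋯ v_n^{m_n}`. -/
def sortedWordEquiv : (Fin n → ℕ) ≃ {w : List (Fin n) // IsSorted w} where
  toFun m := ⟨sortedWord m, isSorted_sortedWord m⟩
  invFun w i := w.1.count i
  left_inv m := funext (count_sortedWord m)
  right_inv w := Subtype.ext w.2.sortedWord_count

lemma prod_map_sortedWord {A : Type*} [Monoid A] (v : Fin n → A) (m : Fin n → ℕ) :
    ((sortedWord m).map v).prod = ((List.finRange n).map fun i => v i ^ m i).prod := by
  simp [sortedWord, List.flatMap, List.map_flatten, List.prod_flatten, Function.comp_def]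

end SortedWords

section CyclicModules

variable {k : Type*} [Field k] {n : ℕ} {G : Type*} [Group G] [Fintype G]
  {M : Type*} [AddCommGroup M] [Module k M] {X : Fin n → Module.End k M} {T : G → Module.End k M}
  {q : Fin n → Fin n → k} {rho : G → Fin n → Fin n → k} {κ : Fin n → Fin n → LowDegree k n G}

lemma isPBWAction_of_relationSubmodule_eq_top (hrel : relationSubmodule X T q rho κ = ⊤) (y : M) :
    IsPBWAction q rho κ X T fun w g => (w.map X).prod (T g y) := by
  have mem : ∀ z, z ∈ relationSubmodule X T q rho κ := fun z => hrel ▸ Submodule.mem_top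
  exact
    { gen_of_isSorted := fun _ _ _ _ _ => rfl
      gen_of_lt := fun _ i j _ _ _ _ _ => gen_gen_of_mem (mem _) i j
      gen_succ := fun _ _ _ _ _ _ => rfl
      group_nil := fun _ h g => group_group_of_mem (mem y) h g
      group_cons := fun _ h j _ _ _ _ => group_gen_of_mem (mem _) h j
      group_succ := fun _ _ _ _ _ _ => rfl }

lemma span_range_pbwFamily_eq_top (hrel : relationSubmodule X T q rho κ = ⊤) {y : M}
    (hone : T 1 y = y)
    (hy : ∀ N : Submodule k M, y ∈ N → (∀ i, N ≤ N.comap (X i)) →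
      (∀ g, N ≤ N.comap (T g)) → N = ⊤) :
    Submodule.span k (Set.range (pbwFamily X T y)) = ⊤ := by
  have H := isPBWAction_of_relationSubmodule_eq_top hrel y
  have le_span : ∀ d, wordFiltration k (fun w g => (w.map X).prod (T g y)) d ≤
      Submodule.span k (Set.range (pbwFamily X T y)) := fun d =>
    wordFiltration_le fun w hw _ g => Submodule.subset_span ⟨(⟨w, hw⟩, g), rfl⟩
  refine hy _ (Submodule.subset_span ⟨(⟨[], isSorted_nil⟩, 1), hone⟩) (fun i => ?_)
    fun h => ?_
  · refine Submodule.span_le.2 (Set.range_subset_iff.2 fun ⟨⟨w, hw⟩, g⟩ => ?_)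
    exact le_span _ ((H.hasLeadingTerms w.length).gen_mem le_rfl i
      (mem_wordFiltration _ hw le_rfl g))
  · refine Submodule.span_le.2 (Set.range_subset_iff.2 fun ⟨⟨w, hw⟩, g⟩ => ?_)
    exact le_span _ ((H.hasLeadingTerms w.length).group_mem le_rfl h
      (mem_wordFiltration _ hw le_rfl g))

end CyclicModules

section FreeAlgebraRepresentations

variable {k : Type*} [Field k] {n : ℕ} {G : Type*}

/-- The PBW monomial `v₁^{m₁} ⋯ v_n^{m_n} # g` in the free algebra. -/
def pbwWord (p : (Fin n → ℕ) × G) : FreeAlgebra k (Fin n ⊕ G) :=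
  ((sortedWord p.1).map (Xv k n G)).prod * Xg k n G p.2

variable {M : Type*} [AddCommGroup M] [Module k M] {X : Fin n → Module.End k M}
  {T : G → Module.End k M} {f : FreeAlgebra k (Fin n ⊕ G) →ₐ[k] Module.End k M}

lemma algHom_pbwWord_apply (hX : ∀ i, f (Xv k n G i) = X i) (hT : ∀ g, f (Xg k n G g) = T g)
    (y : M) (p : (Fin n → ℕ) × G) :
    f (pbwWord p) y = pbwFamily X T y (sortedWordEquiv p.1, p.2) := by
  have hX' : f ∘ Xv k n G = X := funext hX
  rw [pbwWord, map_mul, map_list_prod, List.map_map, hX', hT]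
  rfl

variable [Fintype G] {kapC : Fin n → Fin n → G → k} {kapL : Fin n → Fin n → G → Fin n → k}

lemma map_kappaElt (hX : ∀ i, f (Xv k n G i) = X i) (hT : ∀ g, f (Xg k n G g) = T g) (i j : Fin n) :
    f (kappaElt k n G kapC kapL i j) = lowOp X T (kappa kapC kapL i j) := by
  simp [kappaElt, lowOp, kappa, hX, hT, add_mul, Finset.sum_mul, Algebra.smul_def, mul_assoc]

variable [Group G] {q : Fin n → Fin n → k} {rho : G → Fin n → Fin n → k}

lemma forall_relH_iff (hX : ∀ i, f (Xv k n G i) = X i) (hT : ∀ g, f (Xg k n G g) = T g) :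
    (∀ a b, relH k n G q rho kapC kapL a b → f a = f b) ↔
      relationSubmodule X T q rho (kappa kapC kapL) = ⊤ ∧ T 1 = 1 := by
  constructor
  · intro H
    refine ⟨eq_top_iff.2 fun z _ => mem_relationSubmodule.2
      ⟨fun i j => ?_, fun h i => ?_, fun g h => ?_⟩, ?_⟩
    · have relation := H _ _ (Or.inl ⟨i, j, rfl, rfl⟩)
      rw [map_add, map_smul, map_mul, map_mul, hX, hX, map_kappaElt hX hT] at relation
      exact LinearMap.congr_fun relation z
    · have relation := H _ _ (Or.inr (Or.inr (Or.inr ⟨h, i, rfl, rfl⟩)))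
      simp only [map_mul, map_sum, map_smul, hX, hT] at relation
      simpa using LinearMap.congr_fun relation z
    · have relation := H _ _ (Or.inr (Or.inl ⟨g, h, rfl, rfl⟩))
      rw [map_mul, hT, hT, hT] at relation
      exact LinearMap.congr_fun relation z
    · rw [← hT, H _ _ (Or.inr (Or.inr (Or.inl ⟨rfl, rfl⟩))), map_one]
  · rintro ⟨hrel, hone⟩
    have mem : ∀ z, z ∈ relationSubmodule X T q rho (kappa kapC kapL) :=
      fun z => hrel ▸ Submodule.mem_top
    rintro a b (⟨i, j, rfl, rfl⟩ | ⟨g, h, rfl, rfl⟩ | ⟨rfl, rfl⟩ | ⟨h, i, rfl, rfl⟩)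
    · rw [map_add, map_smul, map_mul, map_mul, hX, hX, map_kappaElt hX hT]
      exact LinearMap.ext fun z => gen_gen_of_mem (mem z) i j
    · rw [map_mul, hT, hT, hT]
      exact LinearMap.ext fun z => group_group_of_mem (mem z) g h
    · rw [hT, hone, map_one]
    · simp only [map_mul, map_sum, map_smul, hX, hT]
      exact LinearMap.ext fun z => by simpa using group_gen_of_mem (mem z) h i

end FreeAlgebraRepresentations

section OrbifoldAlgebra

variable {k : Type*} [Field k] {n : ℕ} {G : Type*} {A : Type*} [Ring A] [Algebra k A]
  {f : FreeAlgebra k (Fin n ⊕ G) →ₐ[k] A}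

lemma submodule_eq_top_of_gen_mul_mem (hf : Function.Surjective f) {N : Submodule k A}
    (hone : 1 ∈ N) (hgen : ∀ i, ∀ x ∈ N, f (Xv k n G i) * x ∈ N)
    (hgroup : ∀ g, ∀ x ∈ N, f (Xg k n G g) * x ∈ N) : N = ⊤ := by
  have mul_mem : ∀ a, ∀ x ∈ N, f a * x ∈ N := fun a => by
    induction a using FreeAlgebra.induction with
    | grade0 c =>
      intro x hx
      rw [AlgHom.commutes, ← Algebra.smul_def]
      exact N.smul_mem c hx
    | grade1 s => exact s.rec hgen hgroup
    | mul a b ha hb =>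
      intro x hx
      rw [map_mul, mul_assoc]
      exact ha _ (hb _ hx)
    | add a b ha hb =>
      intro x hx
      rw [map_add, add_mul]
      exact N.add_mem (ha _ hx) (hb _ hx)
  refine eq_top_iff.2 fun x _ => ?_
  obtain ⟨a, rfl⟩ := hf x
  simpa using mul_mem a 1 hone

variable (f) in
lemma comp_pbwWord_eq : f ∘ pbwWord =
    pbwFamily (fun i => Algebra.lmul k A (f (Xv k n G i)))
      (fun g => Algebra.lmul k A (f (Xg k n G g))) 1 ∘
        sortedWordEquiv.prodCongr (Equiv.refl G) :=
  funext fun p => (mul_one _).symm.trans (algHom_pbwWord_apply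
    (f := (Algebra.lmul k A).comp f) (fun _ => rfl) (fun _ => rfl) 1 p)

variable [Group G] [Fintype G] {q : Fin n → Fin n → k} {rho : G → Fin n → Fin n → k}
  {kapC : Fin n → Fin n → G → k} {kapL : Fin n → Fin n → G → Fin n → k}

lemma relationSubmodule_lmul (hrel : ∀ a b, relH k n G q rho kapC kapL a b → f a = f b) :
    relationSubmodule (fun i => Algebra.lmul k A (f (Xv k n G i)))
      (fun g => Algebra.lmul k A (f (Xg k n G g))) q rho (kappa kapC kapL) = ⊤ ∧
      Algebra.lmul k A (f (Xg k n G 1)) = 1 :=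
  (forall_relH_iff (f := (Algebra.lmul k A).comp f) (fun _ => rfl) fun _ => rfl).1
    fun a b h => congrArg (Algebra.lmul k A) (hrel a b h)

theorem span_range_comp_pbwWord_eq_top
    (hrel : ∀ a b, relH k n G q rho kapC kapL a b → f a = f b) (hf : Function.Surjective f) :
    Submodule.span k (Set.range (f ∘ pbwWord)) = ⊤ := by
  obtain ⟨hrel, hone⟩ := relationSubmodule_lmul hrel
  rw [comp_pbwWord_eq, EquivLike.range_comp]
  exact span_range_pbwFamily_eq_top hrel (LinearMap.congr_fun hone 1)
    fun N => submodule_eq_top_of_gen_mul_mem hf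

theorem IsOrbifoldDatum.overlapsResolve_of_linearIndependent
    (D : IsOrbifoldDatum q rho (kappa kapC kapL))
    (hrel : ∀ a b, relH k n G q rho kapC kapL a b → f a = f b)
    (hli : LinearIndependent k (f ∘ pbwWord)) : OverlapsResolve q rho (kappa kapC kapL) := by
  rw [comp_pbwWord_eq, linearIndependent_equiv] at hli
  exact D.overlapsResolve hli (relationSubmodule_lmul hrel).1

theorem OverlapsResolve.exists_algHom [NeZero (2 : k)]
    (R : OverlapsResolve q rho (kappa kapC kapL)) (D : IsOrbifoldDatum q rho (kappa kapC kapL)) :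
    ∃ (f : FreeAlgebra k (Fin n ⊕ G) →ₐ[k] Module.End k (PBWSpace k n G)) (y : PBWSpace k n G),
      (∀ a b, relH k n G q rho kapC kapL a b → f a = f b) ∧
        LinearIndependent k fun p => f (pbwWord p) y := by
  obtain ⟨X, T, y, hrel, hone, hli⟩ := R.exists_operators D
  have hX : ∀ i, FreeAlgebra.lift k (Sum.elim X T) (Xv k n G i) = X i := fun i => by simp [Xv]
  have hT : ∀ g, FreeAlgebra.lift k (Sum.elim X T) (Xg k n G g) = T g := fun g => by simp [Xg]
  refine ⟨FreeAlgebra.lift k (Sum.elim X T), y, (forall_relH_iff hX hT).2 ⟨hrel, hone⟩, ?_⟩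
  simp only [algHom_pbwWord_apply hX hT]
  exact hli.comp _ (sortedWordEquiv.prodCongr (Equiv.refl G)).injective

variable (q rho kapC kapL) in
/-- The quotient map onto `H_{q,κ}`. -/
def mkH : FreeAlgebra k (Fin n ⊕ G) →ₐ[k] Halg k n G q rho kapC kapL :=
  RingQuot.mkAlgHom k (relH k n G q rho kapC kapL)

lemma mkH_surjective : Function.Surjective (mkH q rho kapC kapL) :=
  RingQuot.mkAlgHom_surjective k _

lemma mkH_eq_of_relH {a b : FreeAlgebra k (Fin n ⊕ G)} (h : relH k n G q rho kapC kapL a b) :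
    mkH q rho kapC kapL a = mkH q rho kapC kapL b :=
  RingQuot.mkAlgHom_rel k h

lemma exists_comp_mkH_eq (h : ∀ a b, relH k n G q rho kapC kapL a b → f a = f b) :
    ∃ F : Halg k n G q rho kapC kapL →ₐ[k] A, ∀ a, F (mkH q rho kapC kapL a) = f a :=
  ⟨RingQuot.liftAlgHom k ⟨f, h⟩, fun a => RingQuot.liftAlgHom_mkAlgHom_apply k f h a⟩

lemma monoH_eq : monoH k n G q rho kapC kapL = mkH q rho kapC kapL ∘ pbwWord := by
  funext p
  rw [Function.comp_apply, pbwWord, prod_map_sortedWord, map_mul, map_list_prod, List.map_map]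
  simp only [Function.comp_def, map_pow]
  rfl

theorem isQDOA_iff_overlapsResolve [NeZero (2 : k)]
    (D : IsOrbifoldDatum q rho (kappa kapC kapL)) :
    IsQDOA k n G q rho kapC kapL ↔ OverlapsResolve q rho (kappa kapC kapL) := by
  rw [IsQDOA, monoH_eq]
  refine ⟨fun ⟨hli, _⟩ => D.overlapsResolve_of_linearIndependent (fun _ _ => mkH_eq_of_relH) hli,
    fun R => ⟨?_, span_range_comp_pbwWord_eq_top (fun _ _ => mkH_eq_of_relH) mkH_surjective⟩⟩
  obtain ⟨f, y, hrel, hli⟩ := R.exists_algHom D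
  obtain ⟨F, hF⟩ := exists_comp_mkH_eq (A := Module.End k (PBWSpace k n G)) hrel
  refine LinearIndependent.of_comp (LinearMap.applyₗ y ∘ₗ F.toLinearMap) ?_
  have eval : (fun p => f (pbwWord p) y) =
      (LinearMap.applyₗ y ∘ₗ F.toLinearMap) ∘ mkH q rho kapC kapL ∘ pbwWord :=
    funext fun p => (LinearMap.congr_fun (hF (pbwWord p)) y).symm
  exact eval ▸ hli

end OrbifoldAlgebra

theorem quantum_drinfeld_orbifold_algebra_iff_pbw_conditions_general
    (k : Type*) [Field k] [NeZero (2 : k)] (n : ℕ) (G : Type*)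
    [Group G] [Fintype G]
    (q : Fin n → Fin n → k) (rho : G → Fin n → Fin n → k)
    (kapC : Fin n → Fin n → G → k) (kapL : Fin n → Fin n → G → Fin n → k)
    (hq_diag : ∀ i, q i i = 1)
    (hq_inv : ∀ i j, q i j * q j i = 1)
    (hrho_one : ∀ i j, rho 1 i j = if i = j then 1 else 0)
    (hrho_mul : ∀ g h i j, rho (g * h) i j = ∑ l, rho g i l * rho h l j)
    (hrho_alg : ∀ g : G, ∃ f : Sq k n q →ₐ[k] Sq k n q,
      ∀ i, f (vS k n q i) = ∑ l, rho g l i • vS k n q l)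
    (hkapC_antisym : ∀ i j g, kapC i j g = -(q i j) * kapC j i g)
    (hkapL_antisym : ∀ i j g l, kapL i j g l = -(q i j) * kapL j i g l) :
    IsQDOA k n G q rho kapC kapL ↔
      Cond1 k n G q rho kapC kapL ∧ Cond2 k n G q rho kapL ∧
        Cond3 k n G q rho kapC kapL ∧ Cond4 k n G q rho kapC kapL := by
  have D : IsOrbifoldDatum q rho (kappa kapC kapL) :=
    { diag := hq_diag
      mul_swap := hq_inv
      one := hrho_one
      mul := hrho_mul
      minor := fun i j h => isQuadRel_minor hq_diag hq_inv (hrho_alg h).choose_spec i j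
      antisymm := fun i j => Prod.ext (funext (hkapC_antisym i j))
        (funext₂ (hkapL_antisym i j)) }
  rw [isQDOA_iff_overlapsResolve D, overlapsResolve_kappa_iff D]

/-- Theorem 2.1 of the paper, after Shroff.  Under the standing
hypotheses (char 0, `q_{ii} = 1`, `q_{ji} = q_{ij}⁻¹`, `G` acting linearly on `V`
by `ρ` so that the action induces algebra automorphisms of `S_q(V)`, and `κ`
bilinear with `κ(vᵢ,vⱼ) = −q_{ij} κ(vⱼ,vᵢ)`), the algebra
`H_{q,κ} = (T(V) ⋊ G)/(vᵢvⱼ − q_{ij}vⱼvᵢ − κ(vᵢ,vⱼ))` is a quantum Drinfeld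
orbifold algebra (equivalently, `{v₁^{m₁}⋯v_n^{m_n} # g}` is a `k`-basis) if and
only if conditions (1)–(4) hold. -/
theorem quantum_drinfeld_orbifold_algebra_iff_pbw_conditions
    (k : Type*) [Field k] [CharZero k] (n : ℕ) (G : Type*)
    [Group G] [Fintype G]
    (q : Fin n → Fin n → k) (rho : G → Fin n → Fin n → k)
    (kapC : Fin n → Fin n → G → k) (kapL : Fin n → Fin n → G → Fin n → k)
    (hq_diag : ∀ i, q i i = 1)
    (hq_inv : ∀ i j, q i j * q j i = 1)
    (hrho_one : ∀ i j, rho 1 i j = if i = j then 1 else 0)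
    (hrho_mul : ∀ g h i j, rho (g * h) i j = ∑ l, rho g i l * rho h l j)
    (hrho_alg : ∀ g : G, ∃ f : Sq k n q →ₐ[k] Sq k n q,
      ∀ i, f (vS k n q i) = ∑ l, rho g l i • vS k n q l)
    (hkapC_antisym : ∀ i j g, kapC i j g = -(q i j) * kapC j i g)
    (hkapL_antisym : ∀ i j g l, kapL i j g l = -(q i j) * kapL j i g l) :
    IsQDOA k n G q rho kapC kapL ↔
      Cond1 k n G q rho kapC kapL ∧ Cond2 k n G q rho kapL ∧
        Cond3 k n G q rho kapC kapL ∧ Cond4 k n G q rho kapC kapL :=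
  quantum_drinfeld_orbifold_algebra_iff_pbw_conditions_general k n G q rho kapC kapL
    hq_diag hq_inv hrho_one hrho_mul hrho_alg hkapC_antisym hkapL_antisym

end QDOA
end
end

section
/- Let k be a field of characteristic 0, V = k³ with basis v_1,v_2,v_3, q_{ij} = −1 for all i ≠ j (and q_{ii} = 1), and G the trivial group. Define κ by κ(v_2,v_1) = v_1, κ(v_3,v_2) = v_3, κ(v_1,v_3) = 0 (extended bilinearly subject to κ(v_i,v_j) = −q_{ij}κ(v_j,v_i)). Then H_{q,κ} = T(V)/(v_2v_1 + v_1v_2 − v_1, v_3v_2 + v_2v_3 − v_3, v_1v_3 + v_3v_1) is a quantum Drinfeld orbifold algebra, i.e., a PBW deformation of S_q(V); in particular {v_1^{m_1}v_2^{m_2}v_3^{m_3} : m_i ≥ 0} is a k-basis of this algebra. -/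
open scoped BigOperators

noncomputable section

/-- The parameters `q_{ij}`: `q_{ii} = 1` and `q_{ij} = -1` for `i ≠ j`. -/
def qEx3 (k : Type*) [Field k] : Fin 3 → Fin 3 → k :=
  fun i j => if i = j then 1 else -1

/-- The parameter function `κ` (with trivial group, valued in `V ⊆ T(V)`):
`κ(v₂,v₁) = v₁`, `κ(v₃,v₂) = v₃`, `κ(v₁,v₃) = 0`, extended subject to
`κ(vᵢ,vⱼ) = -q_{ij} κ(vⱼ,vᵢ)`.  (Indices are shifted down by one:
`v₁ = X 0`, `v₂ = X 1`, `v₃ = X 2`.) -/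
def kappaEx3 (k : Type*) [Field k] : Fin 3 → Fin 3 → FreeAlgebra k (Fin 3) :=
  fun i j =>
    if (i = 1 ∧ j = 0) ∨ (i = 0 ∧ j = 1) then FreeAlgebra.ι k (0 : Fin 3)
    else if (i = 2 ∧ j = 1) ∨ (i = 1 ∧ j = 2) then FreeAlgebra.ι k (2 : Fin 3)
    else 0

/-- The relations defining `H_{q,κ} = T(V)/(vᵢvⱼ - q_{ij} vⱼvᵢ - κ(vᵢ,vⱼ))`,
i.e. `v₂v₁ + v₁v₂ - v₁`, `v₃v₂ + v₂v₃ - v₃`, `v₁v₃ + v₃v₁`. -/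
def relEx3 (k : Type*) [Field k] : FreeAlgebra k (Fin 3) → FreeAlgebra k (Fin 3) → Prop :=
  fun a b => ∃ i j : Fin 3, a = FreeAlgebra.ι k i * FreeAlgebra.ι k j ∧
    b = qEx3 k i j • (FreeAlgebra.ι k j * FreeAlgebra.ι k i) + kappaEx3 k i j

/-- The algebra `H_{q,κ} = T(V)/(v₂v₁ + v₁v₂ − v₁, v₃v₂ + v₂v₃ − v₃, v₁v₃ + v₃v₁)`. -/
def HEx3 (k : Type*) [Field k] := RingQuot (relEx3 k)

instance (k : Type*) [Field k] : Ring (HEx3 k) := by unfold HEx3; infer_instance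
instance (k : Type*) [Field k] : Algebra k (HEx3 k) := by unfold HEx3; infer_instance

/-- The PBW monomial `v₁^{m₁} v₂^{m₂} v₃^{m₃}` in `H_{q,κ}`. -/
def monoEx3 (k : Type*) [Field k] (m : Fin 3 → ℕ) : HEx3 k :=
  ((List.finRange 3).map
    (fun i => (RingQuot.mkAlgHom k (relEx3 k) (FreeAlgebra.ι k i)) ^ (m i))).prod

/-!
The three relations say `v₂v₁ = v₁(1 - v₂)`, `v₃v₂ = (1 - v₂)v₃` and `v₃v₁ = -v₁v₃`; pushing each
generator to the right through `v₁` and then `v₂` shows that the span of the PBW monomials is a left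
ideal containing `1`.  For independence let the algebra act on pairs of polynomials in `x, y, z` by
`v₁(f, g) = (xg, xf)`, `v₂(f, g) = (yf, (1 - y)g)`, `v₃(f, g) = (zθf, -zθg)`, where `θ` substitutes
`1 - y` for `y`.  Applying `v₁^a v₂^b v₃^c` to `(1, 0)` and adding the two components yields the
monomial `x^a y^b z^c`.
-/

namespace HEx3

/-- The defining relations of `HEx3`, imposed on a triple of elements `v₁ = v 0`, `v₂ = v 1`,
`v₃ = v 2` of an arbitrary ring. -/
structure Relations {A : Type*} [Ring A] (v : Fin 3 → A) : Prop where
  one_zero : v 1 * v 0 + v 0 * v 1 = v 0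
  two_one : v 2 * v 1 + v 1 * v 2 = v 2
  zero_two : v 0 * v 2 + v 2 * v 0 = 0

/-- The ordered monomial `v₁^{m₁} v₂^{m₂} v₃^{m₃}` in a triple of elements `v₁ = v 0`,
`v₂ = v 1`, `v₃ = v 2` of a monoid. -/
def orderedMonomial {A : Type*} [Monoid A] (v : Fin 3 → A) (m : Fin 3 → ℕ) : A :=
  v 0 ^ m 0 * v 1 ^ m 1 * v 2 ^ m 2

section Spanning

variable {R A : Type*} [CommRing R] [Ring A] [Algebra R A]

theorem submodule_eq_top_of_adjoin_eq_top {s : Set A} (hs : Algebra.adjoin R s = ⊤)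
    {W : Submodule R A} (one_mem : 1 ∈ W) (mul_mem : ∀ a ∈ s, ∀ w ∈ W, a * w ∈ W) : W = ⊤ := by
  have adjoin_mul_mem : ∀ a ∈ Algebra.adjoin R s, ∀ w ∈ W, a * w ∈ W := by
    intro a ha
    induction ha using Algebra.adjoin_induction with
    | mem a ha => exact mul_mem a ha
    | algebraMap r =>
      intro w hw
      rw [← Algebra.smul_def]
      exact W.smul_mem r hw
    | add a b _ _ iha ihb =>
      intro w hw
      rw [add_mul]
      exact W.add_mem (iha w hw) (ihb w hw)
    | mul a b _ _ iha ihb =>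
      intro w hw
      rw [mul_assoc]
      exact iha _ (ihb w hw)
  refine Submodule.eq_top_iff'.2 fun a => ?_
  simpa only [mul_one] using adjoin_mul_mem a (hs ▸ Algebra.mem_top) 1 one_mem

theorem mul_mem_span_range {ι : Type*} {b : ι → A} {a : A}
    (h : ∀ i, a * b i ∈ Submodule.span R (Set.range b)) :
    ∀ w ∈ Submodule.span R (Set.range b), a * w ∈ Submodule.span R (Set.range b) := by
  have span_le : Submodule.span R (Set.range b) ≤
      (Submodule.span R (Set.range b)).comap (LinearMap.mulLeft R a) :=
    Submodule.span_le.2 (Set.range_subset_iff.2 h)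
  exact fun w hw => span_le hw

variable {v : Fin 3 → A}

variable (R v) in
/-- The `R`-span of the ordered monomials in `v`, to be shown a left ideal under `Relations v`. -/
def monomialSpan : Submodule R A :=
  Submodule.span R (Set.range (orderedMonomial v))

theorem pow_mul_pow_mul_pow_mem_monomialSpan (a b c : ℕ) :
    v 0 ^ a * (v 1 ^ b * v 2 ^ c) ∈ monomialSpan R v :=
  Submodule.subset_span ⟨![a, b, c], mul_assoc _ _ _⟩

theorem pow_mul_pow_mem_monomialSpan (b c : ℕ) : v 1 ^ b * v 2 ^ c ∈ monomialSpan R v := by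
  simpa only [pow_zero, one_mul] using pow_mul_pow_mul_pow_mem_monomialSpan (R := R) (v := v) 0 b c

theorem mul_mem_monomialSpan {a : A}
    (h : ∀ i j l : ℕ, a * (v 0 ^ i * (v 1 ^ j * v 2 ^ l)) ∈ monomialSpan R v) :
    ∀ w ∈ monomialSpan R v, a * w ∈ monomialSpan R v :=
  mul_mem_span_range fun m => by
    rw [orderedMonomial, mul_assoc (v 0 ^ m 0)]
    exact h _ _ _

theorem apply_zero_mul_mem_monomialSpan : ∀ w ∈ monomialSpan R v, v 0 * w ∈ monomialSpan R v :=
  mul_mem_monomialSpan fun a b c => by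
    rw [← mul_assoc, ← pow_succ']
    exact pow_mul_pow_mul_pow_mem_monomialSpan (a + 1) b c

theorem Relations.apply_one_mul_mem_monomialSpan (hv : Relations v) :
    ∀ w ∈ monomialSpan R v, v 1 * w ∈ monomialSpan R v := by
  refine mul_mem_monomialSpan fun a b c => ?_
  set u := v 1 ^ b * v 2 ^ c
  induction a with
  | zero =>
    rw [pow_zero, one_mul, ← mul_assoc, ← pow_succ']
    exact pow_mul_pow_mem_monomialSpan (b + 1) c
  | succ a ih =>
    have move_right : v 1 * (v 0 ^ (a + 1) * u) =
        v 0 * (v 0 ^ a * u) - v 0 * (v 1 * (v 0 ^ a * u)) := by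
      rw [pow_succ', mul_assoc, ← mul_assoc, eq_sub_of_add_eq hv.one_zero, sub_mul, mul_assoc (v 0)]
    rw [move_right]
    exact sub_mem
      (apply_zero_mul_mem_monomialSpan _ (pow_mul_pow_mul_pow_mem_monomialSpan a b c))
      (apply_zero_mul_mem_monomialSpan _ ih)

theorem Relations.apply_two_mul_pow_mul_pow_mem_monomialSpan (hv : Relations v) (b c : ℕ) :
    v 2 * (v 1 ^ b * v 2 ^ c) ∈ monomialSpan R v := by
  induction b with
  | zero =>
    rw [pow_zero, one_mul, ← pow_succ']
    simpa only [pow_zero, one_mul] using pow_mul_pow_mem_monomialSpan (R := R) (v := v) 0 (c + 1)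
  | succ b ih =>
    have move_right : v 2 * (v 1 ^ (b + 1) * v 2 ^ c) =
        v 2 * (v 1 ^ b * v 2 ^ c) - v 1 * (v 2 * (v 1 ^ b * v 2 ^ c)) := by
      rw [pow_succ', mul_assoc, ← mul_assoc, eq_sub_of_add_eq hv.two_one, sub_mul, mul_assoc (v 1)]
    rw [move_right]
    exact sub_mem ih (hv.apply_one_mul_mem_monomialSpan _ ih)

theorem Relations.apply_two_mul_mem_monomialSpan (hv : Relations v) :
    ∀ w ∈ monomialSpan R v, v 2 * w ∈ monomialSpan R v := by
  refine mul_mem_monomialSpan fun a b c => ?_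
  set u := v 1 ^ b * v 2 ^ c
  induction a with
  | zero =>
    rw [pow_zero, one_mul]
    exact hv.apply_two_mul_pow_mul_pow_mem_monomialSpan b c
  | succ a ih =>
    have move_right : v 2 * (v 0 ^ (a + 1) * u) = -(v 0 * (v 2 * (v 0 ^ a * u))) := by
      rw [pow_succ', mul_assoc, ← mul_assoc, eq_neg_of_add_eq_zero_right hv.zero_two, neg_mul,
        mul_assoc (v 0)]
    rw [move_right]
    exact neg_mem (apply_zero_mul_mem_monomialSpan _ ih)

theorem Relations.monomialSpan_eq_top (hv : Relations v)
    (adjoin_eq_top : Algebra.adjoin R (Set.range v) = ⊤) : monomialSpan R v = ⊤ := by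
  refine submodule_eq_top_of_adjoin_eq_top adjoin_eq_top
    (Submodule.subset_span ⟨0, by simp [orderedMonomial]⟩) (Set.forall_mem_range.2 fun i => ?_)
  fin_cases i
  exacts [apply_zero_mul_mem_monomialSpan, hv.apply_one_mul_mem_monomialSpan,
    hv.apply_two_mul_mem_monomialSpan]

end Spanning

section Representation

open MvPolynomial

variable (R : Type*) [CommRing R]

/-- The substitution `θ : y ↦ 1 - y` of `R[x, y, z]`, where `x = X 0`, `y = X 1`, `z = X 2`. -/
def reflection : MvPolynomial (Fin 3) R →ₐ[R] MvPolynomial (Fin 3) R :=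
  aeval ![X 0, 1 - X 1, X 2]

/-- The operators by which the generators of `HEx3` act on pairs of polynomials.  In the orbit of
`(1, 0)` the component records the parity of the degree in `x`, which decides whether `v₂`
multiplies by `y` or by `1 - y`. -/
def pairAction : Fin 3 → Module.End R (MvPolynomial (Fin 3) R × MvPolynomial (Fin 3) R) :=
  ![(LinearMap.mulLeft R (X 0)).prodMap (LinearMap.mulLeft R (X 0)) ∘ₗ
      (LinearEquiv.prodComm R _ _).toLinearMap,
    (LinearMap.mulLeft R (X 1)).prodMap (LinearMap.mulLeft R (1 - X 1)),
    (LinearMap.mulLeft R (X 2) ∘ₗ (reflection R).toLinearMap).prodMap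
      (LinearMap.mulLeft R (-X 2) ∘ₗ (reflection R).toLinearMap)]

variable {R}
variable (f g : MvPolynomial (Fin 3) R)
variable (u : Module.End R (MvPolynomial (Fin 3) R × MvPolynomial (Fin 3) R))

theorem pairAction_zero_apply : pairAction R 0 (f, g) = (X 0 * g, X 0 * f) := rfl

theorem pairAction_one_apply : pairAction R 1 (f, g) = (X 1 * f, (1 - X 1) * g) := rfl

theorem pairAction_two_apply :
    pairAction R 2 (f, g) = (X 2 * reflection R f, -X 2 * reflection R g) := rfl

variable (R) in
theorem relations_pairAction : Relations (pairAction R) where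
  one_zero := LinearMap.ext fun ⟨f, g⟩ => by
    simp only [LinearMap.add_apply, Module.End.mul_apply, pairAction_zero_apply,
      pairAction_one_apply, Prod.mk_add_mk]
    congr 1 <;> ring
  two_one := LinearMap.ext fun ⟨f, g⟩ => by
    have reflection_X_one : reflection R (X 1) = 1 - X 1 := by simp [reflection]
    simp only [LinearMap.add_apply, Module.End.mul_apply, pairAction_one_apply,
      pairAction_two_apply, map_mul, map_sub, map_one, reflection_X_one, Prod.mk_add_mk]
    congr 1 <;> ring
  zero_two := LinearMap.ext fun ⟨f, g⟩ => by
    have reflection_X_zero : reflection R (X 0) = X 0 := by simp [reflection]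
    simp only [LinearMap.add_apply, Module.End.mul_apply, pairAction_zero_apply,
      pairAction_two_apply, map_mul, reflection_X_zero, Prod.mk_add_mk, LinearMap.zero_apply]
    congr 1 <;> ring

variable (R) in
/-- The evaluation of an operator at `(1, 0)`, followed by addition of the two components.  It
carries the ordered monomials in `pairAction R` to the monomials of `R[x, y, z]`. -/
def evalSum : Module.End R (MvPolynomial (Fin 3) R × MvPolynomial (Fin 3) R) →ₗ[R]
    MvPolynomial (Fin 3) R :=
  LinearMap.id.coprod LinearMap.id ∘ₗ LinearMap.applyₗ (1, 0)

theorem pairAction_two_pow_apply (c : ℕ) :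
    (pairAction R 2 ^ c) (1, 0) = (X 2 ^ c, 0) := by
  induction c with
  | zero => rfl
  | succ c ih =>
    have reflection_X_two : reflection R (X 2) = X 2 := by simp [reflection]
    rw [pow_succ', Module.End.mul_apply, ih, pairAction_two_apply, map_pow, reflection_X_two,
      map_zero, mul_zero, pow_succ']

theorem pairAction_one_pow_apply (b : ℕ) :
    (pairAction R 1 ^ b) (f, 0) = (X 1 ^ b * f, 0) := by
  induction b with
  | zero => rw [pow_zero, pow_zero, one_mul, Module.End.one_apply]
  | succ b ih =>
    rw [pow_succ', Module.End.mul_apply, ih, pairAction_one_apply, mul_zero, pow_succ', mul_assoc]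

theorem evalSum_apply : evalSum R u = (u (1, 0)).1 + (u (1, 0)).2 := rfl

theorem evalSum_pairAction_zero_mul :
    evalSum R (pairAction R 0 * u) = X 0 * evalSum R u := by
  rw [evalSum_apply, evalSum_apply, Module.End.mul_apply, ← Prod.mk.eta (p := u (1, 0)),
    pairAction_zero_apply]
  ring

theorem evalSum_pairAction_zero_pow_mul (a : ℕ) :
    evalSum R (pairAction R 0 ^ a * u) = X 0 ^ a * evalSum R u := by
  induction a with
  | zero => rw [pow_zero, pow_zero, one_mul, one_mul]
  | succ a ih =>
    rw [pow_succ', mul_assoc, evalSum_pairAction_zero_mul, ih, pow_succ', mul_assoc]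

theorem evalSum_orderedMonomial (m : Fin 3 → ℕ) :
    evalSum R (orderedMonomial (pairAction R) m) =
      monomial (Finsupp.equivFunOnFinite.symm m) 1 := by
  calc evalSum R (orderedMonomial (pairAction R) m)
      = X 0 ^ m 0 * (X 1 ^ m 1 * X 2 ^ m 2 + 0) := by
        rw [orderedMonomial, mul_assoc, evalSum_pairAction_zero_pow_mul, evalSum_apply,
          Module.End.mul_apply, pairAction_two_pow_apply, pairAction_one_pow_apply]
    _ = monomial (Finsupp.equivFunOnFinite.symm m) 1 := by
        simp [monomial_eq, Finsupp.prod_fintype, Fin.prod_univ_three, mul_assoc]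

variable (R) in
theorem linearIndependent_orderedMonomial_pairAction :
    LinearIndependent R (orderedMonomial (pairAction R)) := by
  refine LinearIndependent.of_comp (evalSum R) ?_
  rw [show evalSum R ∘ orderedMonomial (pairAction R) =
    basisMonomials (Fin 3) R ∘ Finsupp.equivFunOnFinite.symm from
    funext fun m => by simp [evalSum_orderedMonomial]]
  exact (basisMonomials (Fin 3) R).linearIndependent.comp _ (Equiv.injective _)

end Representation

section Presentation

variable {k : Type*} [Field k]

theorem relations_iff_lift_eq {A : Type*} [Ring A] [Algebra k A] {v : Fin 3 → A} :
    Relations v ↔ ∀ ⦃a b⦄, relEx3 k a b → FreeAlgebra.lift k v a = FreeAlgebra.lift k v b := by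
  have lift_eq_iff : (∀ ⦃a b⦄, relEx3 k a b → FreeAlgebra.lift k v a = FreeAlgebra.lift k v b) ↔
      ∀ i j, v i * v j = qEx3 k i j • (v j * v i) + FreeAlgebra.lift k v (kappaEx3 k i j) := by
    refine ⟨fun h i j => by simpa using h ⟨i, j, rfl, rfl⟩, ?_⟩
    rintro h _ _ ⟨i, j, rfl, rfl⟩
    simpa using h i j
  have equations_iff :
      (∀ i j, v i * v j = qEx3 k i j • (v j * v i) + FreeAlgebra.lift k v (kappaEx3 k i j)) ↔
        (v 1 * v 0 + v 0 * v 1 = v 0 ∧ v 0 * v 2 + v 2 * v 0 = 0) ∧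
        (v 1 * v 0 + v 0 * v 1 = v 0 ∧ v 2 * v 1 + v 1 * v 2 = v 2) ∧
        v 0 * v 2 + v 2 * v 0 = 0 ∧ v 2 * v 1 + v 1 * v 2 = v 2 := by
    simp [Fin.forall_fin_succ, qEx3, kappaEx3, eq_neg_add_iff_add_eq, eq_neg_iff_add_eq_zero,
      add_comm (v 0 * v 1), add_comm (v 1 * v 2)]
  rw [lift_eq_iff, equations_iff]
  exact ⟨fun ⟨h10, h21, h02⟩ => ⟨⟨h10, h02⟩, ⟨h10, h21⟩, h02, h21⟩,
    fun ⟨⟨h10, h02⟩, ⟨_, h21⟩, _⟩ => ⟨h10, h21, h02⟩⟩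

variable (k)

/-- The quotient map from the free algebra onto `HEx3`; valued in `HEx3 k` rather than in the
underlying `RingQuot`, so that the algebra structure of `HEx3 k` is the one found. -/
def mk : FreeAlgebra k (Fin 3) →ₐ[k] HEx3 k :=
  RingQuot.mkAlgHom k (relEx3 k)

/-- The image of `vᵢ₊₁` in `HEx3`; these three elements generate it. -/
def gen (i : Fin 3) : HEx3 k :=
  mk k (FreeAlgebra.ι k i)

theorem lift_gen_eq_mk : FreeAlgebra.lift k (gen k) = mk k :=
  FreeAlgebra.hom_ext (funext fun i => FreeAlgebra.lift_ι_apply _ i)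

theorem relations_gen : Relations (gen k) := by
  rw [relations_iff_lift_eq (k := k), lift_gen_eq_mk]
  exact fun _ _ h => RingQuot.mkAlgHom_rel k h

theorem adjoin_range_gen : Algebra.adjoin k (Set.range (gen k)) = ⊤ := by
  rw [Algebra.adjoin_range_eq_range_freeAlgebra_lift, lift_gen_eq_mk]
  exact (AlgHom.range_eq_top _).2 (RingQuot.mkAlgHom_surjective k (relEx3 k))

variable {k}

/-- The universal property of `HEx3`: the homomorphism determined by a triple satisfying its
relations. -/
def lift {A : Type*} [Ring A] [Algebra k A] {v : Fin 3 → A} (hv : Relations v) :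
    HEx3 k →ₐ[k] A :=
  RingQuot.liftAlgHom k ⟨FreeAlgebra.lift k v, relations_iff_lift_eq.1 hv⟩

theorem lift_gen {A : Type*} [Ring A] [Algebra k A] {v : Fin 3 → A} (hv : Relations v)
    (i : Fin 3) : lift (k := k) hv (gen k i) = v i :=
  (RingQuot.liftAlgHom_mkAlgHom_apply k _ _ _).trans (FreeAlgebra.lift_ι_apply v i)

theorem lift_orderedMonomial_gen {A : Type*} [Ring A] [Algebra k A] {v : Fin 3 → A}
    (hv : Relations v) (m : Fin 3 → ℕ) :
    lift (k := k) hv (orderedMonomial (gen k) m) = orderedMonomial v m := by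
  simp only [orderedMonomial, map_mul, map_pow, lift_gen]

variable (k)

theorem linearIndependent_orderedMonomial_gen : LinearIndependent k (orderedMonomial (gen k)) := by
  refine LinearIndependent.of_comp (lift (relations_pairAction k)).toLinearMap ?_
  rw [show ⇑(lift (relations_pairAction k)).toLinearMap ∘ orderedMonomial (gen k) =
    orderedMonomial (pairAction k) from funext (lift_orderedMonomial_gen _)]
  exact linearIndependent_orderedMonomial_pairAction k

theorem monoEx3_eq_orderedMonomial : monoEx3 k = orderedMonomial (gen k) := by
  funext m
  have prod_map_finRange (f : Fin 3 → HEx3 k) :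
      ((List.finRange 3).map f).prod = f 0 * f 1 * f 2 := by
    simp [List.finRange_succ, mul_assoc]
  exact prod_map_finRange fun i => gen k i ^ m i

end Presentation

end HEx3

theorem example_trivial_group_is_quantum_drinfeld_orbifold_algebra_general
    (k : Type*) [Field k] :
    LinearIndependent k (monoEx3 k) ∧
      Submodule.span k (Set.range (monoEx3 k)) = ⊤ := by
  rw [HEx3.monoEx3_eq_orderedMonomial]
  exact ⟨HEx3.linearIndependent_orderedMonomial_gen k,
    (HEx3.relations_gen k).monomialSpan_eq_top (HEx3.adjoin_range_gen k)⟩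

/-- With `q_{ij} = -1` for `i ≠ j` and
`κ(v₂,v₁) = v₁`, `κ(v₃,v₂) = v₃`, `κ(v₁,v₃) = 0`, the algebra
`H_{q,κ} = T(V)/(v₂v₁+v₁v₂−v₁, v₃v₂+v₂v₃−v₃, v₁v₃+v₃v₁)` is a quantum Drinfeld
orbifold algebra, i.e. a PBW deformation of `S_q(V)`: the monomials
`v₁^{m₁} v₂^{m₂} v₃^{m₃}` form a `k`-basis. -/
theorem example_trivial_group_is_quantum_drinfeld_orbifold_algebra
    (k : Type*) [Field k] [CharZero k] :
    LinearIndependent k (monoEx3 k) ∧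
      Submodule.span k (Set.range (monoEx3 k)) = ⊤ :=
  example_trivial_group_is_quantum_drinfeld_orbifold_algebra_general k
end
end

section
/- Let G = 1 and let H_{q,κ} be a quantum Drinfeld orbifold algebra such that for each triple i,j,l with i ≠ j, if C_l^{i,j} ≠ 0 then q_{im}q_{jm} = q_{lm} for all m, and such that both sides of PBW condition (3) vanish for all triples. Set [v_i,v_j] = κ^L(v_i,v_j) and ω(v_i,v_j) = κ^C(v_i,v_j). Then ω satisfies the ε-compatibility condition: for all i,j,k, q_{ki}·ω(v_i,[v_j,v_k]) + q_{ij}·ω(v_j,[v_k,v_i]) + q_{jk}·ω(v_k,[v_i,v_j]) = 0, where ω is extended bilinearly to V×V. -/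
open scoped BigOperators

noncomputable section

namespace QDOA11

/-- The defining relations of `H_{q,κ}` with trivial group `G = 1`:
`vᵢvⱼ − q_{ij} vⱼvᵢ − κ(vᵢ,vⱼ)` where `κ = κ^C + κ^L`. -/
def relH (k : Type*) [Field k] (n : ℕ) (q : Fin n → Fin n → k)
    (kapC : Fin n → Fin n → k) (kapL : Fin n → Fin n → Fin n → k) :
    FreeAlgebra k (Fin n) → FreeAlgebra k (Fin n) → Prop := fun a b =>
  ∃ i j : Fin n, a = FreeAlgebra.ι k i * FreeAlgebra.ι k j ∧
    b = q i j • (FreeAlgebra.ι k j * FreeAlgebra.ι k i)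
      + (∑ l, kapL i j l • FreeAlgebra.ι k l) + algebraMap k _ (kapC i j)

/-- The algebra `H_{q,κ} = T(V)/(vᵢvⱼ − q_{ij}vⱼvᵢ − κ(vᵢ,vⱼ))` (trivial group). -/
def Halg (k : Type*) [Field k] (n : ℕ) (q : Fin n → Fin n → k)
    (kapC : Fin n → Fin n → k) (kapL : Fin n → Fin n → Fin n → k) :=
  RingQuot (relH k n q kapC kapL)

instance (k : Type*) [Field k] (n : ℕ) (q : Fin n → Fin n → k)
    (kapC : Fin n → Fin n → k) (kapL : Fin n → Fin n → Fin n → k) :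
    Ring (Halg k n q kapC kapL) := by unfold Halg; infer_instance

instance (k : Type*) [Field k] (n : ℕ) (q : Fin n → Fin n → k)
    (kapC : Fin n → Fin n → k) (kapL : Fin n → Fin n → Fin n → k) :
    Algebra k (Halg k n q kapC kapL) := by unfold Halg; infer_instance

/-- The PBW monomial `v₁^{m₁} ⋯ v_n^{m_n}` in `H_{q,κ}`. -/
def monoH (k : Type*) [Field k] (n : ℕ) (q : Fin n → Fin n → k)
    (kapC : Fin n → Fin n → k) (kapL : Fin n → Fin n → Fin n → k)
    (m : Fin n → ℕ) : Halg k n q kapC kapL :=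
  ((List.finRange n).map
    (fun i => (RingQuot.mkAlgHom k (relH k n q kapC kapL) (FreeAlgebra.ι k i)) ^ (m i))).prod

/-- The standard basis vector of `V = Fin n → k`. -/
def ev (k : Type*) [Field k] (n : ℕ) (i : Fin n) : Fin n → k := Pi.single i 1

/-- Bilinear extension of vector-valued structure constants to `V × V`. -/
def bil (k : Type*) [Field k] (n : ℕ) (c : Fin n → Fin n → Fin n → k)
    (x y : Fin n → k) : Fin n → k := fun t => ∑ a, ∑ b, x a * y b * c a b t

/-- Bilinear extension of `ω = κ^C` to `V × V`. -/
def ombil (k : Type*) [Field k] (n : ℕ) (c : Fin n → Fin n → k)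
    (x y : Fin n → k) : k := ∑ a, ∑ b, x a * y b * c a b

/-!
In any associative algebra the quantum commutator `[x, y]_s = xy - s yx` satisfies the Jacobi
identity `c [x, [y, z]_b]_{a/c} + a [y, [z, x]_c]_{b/a} + b [z, [x, y]_a]_{c/b} = 0`. Apply it to
the generators of `H_{q,κ}` with `a = q_{ij}`, `b = q_{jm}`, `c = q_{mi}`: the inner commutators
are the values of `κ`, and the hypothesis on the structure constants says precisely that the outer
parameter `q_{ij} q_{im}` is the right one for commuting `vᵢ` past every `vₗ` occurring in
`κ^L(vⱼ, v_m)`. The left-hand side therefore lies in the span of `1` and the generators, which are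
independent, and its constant coefficient is the left-hand side of the `ε`-compatibility
condition, as `κ^C(vⱼ, v_m)` only contributes a multiple of `vᵢ`.
-/

section QuantumCommutator

variable {R A : Type*} [CommRing R] [Ring A] [Algebra R A]

/-- The quantum commutator `(x, y) ↦ xy - s yx` of an algebra, as a bilinear map. -/
def qComm (s : R) : A →ₗ[R] A →ₗ[R] A :=
  LinearMap.mul R A - s • (LinearMap.mul R A).flip

theorem qComm_apply (s : R) (x y : A) : qComm s x y = x * y - s • (y * x) := rfl

theorem qComm_one_self (x : A) : qComm (1 : R) x x = 0 := by
  rw [qComm_apply, one_smul, sub_self]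

theorem qComm_algebraMap (s : R) (x : A) (c : R) :
    qComm s x (algebraMap R A c) = (c * (1 - s)) • x := by
  rw [qComm_apply, ← Algebra.commutes, ← Algebra.smul_def]
  module

theorem qComm_jacobi {a b c a' b' c' : R} (ha : a * a' = 1) (hb : b * b' = 1) (hc : c * c' = 1)
    (x y z : A) :
    c • qComm (a * c') x (qComm b y z) + a • qComm (b * a') y (qComm c z x)
      + b • qComm (c * b') z (qComm a x y) = 0 := by
  have cancel {s t t' : R} (h : t * t' = 1) (u v : A) :
      t • qComm (s * t') u v = t • (u * v) - s • (v * u) := by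
    rw [qComm_apply, smul_sub, smul_smul, mul_left_comm, h, mul_one]
  rw [cancel ha, cancel hb, cancel hc]
  simp only [qComm_apply, mul_sub, sub_mul, mul_smul_comm, smul_mul_assoc,
    mul_assoc]
  module

end QuantumCommutator

section AffineRelations

variable {R A ι : Type*} [CommRing R] [Ring A] [Algebra R A] [Fintype ι]

/-- The map `V ⊕ k → A` sending `(∑ aₗ vₗ, c)` to `∑ aₗ Xₗ + c`, through which `κ` enters the
relations of `H_{q,κ}`; here `V` is `ι → R`. -/
def evalAffine (X : ι → A) : (ι → R) × R →ₗ[R] A :=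
  (Fintype.linearCombination R X).coprod (Algebra.linearMap R A)

theorem evalAffine_apply (X : ι → A) (p : (ι → R) × R) :
    evalAffine X p = ∑ l, p.1 l • X l + algebraMap R A p.2 := rfl

theorem evalAffine_injective {X : ι → A}
    (hX : LinearIndependent R fun o : Option ι => o.elim 1 X) :
    Function.Injective (evalAffine (R := R) X) := by
  rw [injective_iff_map_eq_zero]
  rintro ⟨a, c⟩ h
  have hcoeff := Fintype.linearIndependent_iff.1 hX (fun o => o.elim c a) (by
    rwa [Fintype.sum_option, add_comm, Option.elim, Option.elim,
      ← Algebra.algebraMap_eq_smul_one])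
  exact Prod.ext (funext fun l => hcoeff (some l)) (hcoeff none)

variable {X : ι → A} {q : ι → ι → R} {κ : ι → ι → (ι → R) × R}

theorem eq_zero_of_qComm_one_self_eq (hX : LinearIndependent R fun o : Option ι => o.elim 1 X)
    {x : A} {p : (ι → R) × R} (h : qComm (1 : R) x x = evalAffine X p) : p = 0 :=
  evalAffine_injective hX <| by rw [← h, qComm_one_self, map_zero]

theorem qComm_evalAffine [DecidableEq ι] {i : ι}
    (hrel : ∀ j, qComm (q i j) (X i) (X j) = evalAffine X (κ i j))
    {s : R} {p : (ι → R) × R} (hs : ∀ l, p.1 l ≠ 0 → s = q i l) :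
    qComm s (X i) (evalAffine X p) =
      evalAffine X (∑ l, p.1 l • κ i l + (Pi.single i (p.2 * (1 - s)), 0)) := by
  have hsingle (c : R) : evalAffine X (Pi.single i c, 0) = c • X i := by
    simp [evalAffine_apply, Pi.single_apply]
  have hterm (l : ι) : p.1 l • qComm s (X i) (X l) = p.1 l • evalAffine X (κ i l) := by
    by_cases hl : p.1 l = 0
    · rw [hl, zero_smul, zero_smul]
    · rw [hs l hl, hrel]
  rw [evalAffine_apply X p]
  simp only [map_add, map_sum, map_smul, qComm_algebraMap, hterm, hsingle]

theorem epsilon_compatibility (hX : LinearIndependent R fun o : Option ι => o.elim 1 X)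
    (hrel : ∀ i j, qComm (q i j) (X i) (X j) = evalAffine X (κ i j))
    (hq_diag : ∀ i, q i i = 1) (hq_inv : ∀ i j, q i j * q j i = 1)
    (hκ : ∀ i j l, i ≠ j → (κ i j).1 l ≠ 0 → ∀ m, q i m * q j m = q l m) (i j m : ι) :
    q m i * ∑ l, (κ j m).1 l * (κ i l).2 + q i j * ∑ l, (κ m i).1 l * (κ j l).2
      + q j m * ∑ l, (κ i j).1 l * (κ m l).2 = 0 := by
  classical
  have hq_mul (x a b l : ι) (hl : (κ a b).1 l ≠ 0) : q x a * q x b = q x l := by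
    have hab : a ≠ b := by
      rintro rfl
      have hκ_self : κ a a = 0 := eq_zero_of_qComm_one_self_eq hX (hq_diag a ▸ hrel a a)
      exact hl (by rw [hκ_self]; rfl)
    refine left_inv_eq_right_inv (a := q l x) ?_ (hq_inv l x)
    rw [← hκ a b l hab hl x, mul_mul_mul_comm, hq_inv, hq_inv, one_mul]
  have hjacobi := qComm_jacobi (hq_inv i j) (hq_inv j m) (hq_inv m i) (X i) (X j) (X m)
  rw [hrel, hrel, hrel, qComm_evalAffine (hrel i) (hq_mul i j m),
    qComm_evalAffine (hrel j) (hq_mul j m i), qComm_evalAffine (hrel m) (hq_mul m i j)] at hjacobi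
  simp only [← map_smul, ← map_add] at hjacobi
  have hconst := congrArg Prod.snd (evalAffine_injective hX (hjacobi.trans (map_zero _).symm))
  simpa [Prod.snd_sum] using hconst

end AffineRelations

section PBW

variable {k : Type*} [Field k] {n : ℕ} {q : Fin n → Fin n → k}
  {kapC : Fin n → Fin n → k} {kapL : Fin n → Fin n → Fin n → k}

variable (q kapC kapL) in
/-- The image of the basis vector `vᵢ` in `H_{q,κ}`. -/
def gen (i : Fin n) : Halg k n q kapC kapL :=
  RingQuot.mkAlgHom k (relH k n q kapC kapL) (FreeAlgebra.ι k i)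

theorem qComm_gen (i j : Fin n) :
    qComm (q i j) (gen q kapC kapL i) (gen q kapC kapL j) =
      evalAffine (gen q kapC kapL) (kapL i j, kapC i j) := by
  have h := RingQuot.mkAlgHom_rel k (s := relH k n q kapC kapL) ⟨i, j, rfl, rfl⟩
  simp only [map_mul, map_add, map_smul, map_sum, AlgHom.commutes, add_assoc] at h
  exact sub_eq_of_eq_add' h

theorem monoH_zero : monoH k n q kapC kapL 0 = 1 :=
  List.prod_eq_one fun _ hx => by
    obtain ⟨i, -, rfl⟩ := List.mem_map.1 hx
    exact pow_zero _

theorem monoH_single (t : Fin n) :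
    monoH k n q kapC kapL (Pi.single t 1) = gen q kapC kapL t := by
  unfold monoH
  rw [List.prod_map_eq_pow_single t _ fun i hi _ => by rw [Pi.single_eq_of_ne hi, pow_zero],
    Pi.single_eq_same, pow_one,
    List.count_eq_one_of_mem (List.nodup_finRange n) (List.mem_finRange t), pow_one]
  rfl

theorem linearIndependent_one_gen (h : LinearIndependent k (monoH k n q kapC kapL)) :
    LinearIndependent k fun o : Option (Fin n) => o.elim 1 (gen q kapC kapL) := by
  let exponent : Option (Fin n) → Fin n → ℕ := fun o => o.elim 0 fun t => Pi.single t 1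
  have hexponent : Function.Injective exponent := by
    rintro (_ | s) (_ | t) hst
    · rfl
    · exact absurd hst.symm (by simp [exponent])
    · exact absurd hst (by simp [exponent])
    · exact congrArg some ((Pi.linearIndependent_single_one (Fin n) ℕ).injective hst)
  convert h.comp exponent hexponent using 1
  ext (_ | t)
  · exact monoH_zero.symm
  · exact (monoH_single t).symm

theorem ombil_ev (c : Fin n → Fin n → k) (i : Fin n) (y : Fin n → k) :
    ombil k n c (ev k n i) y = ∑ l, y l * c i l := by
  simp [ombil, ev, Pi.single_apply]

theorem omega_compatibility_of_qdoa_general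
    (hq_diag : ∀ i, q i i = 1)
    (hq_inv : ∀ i j, q i j * q j i = 1)
    (h_pbw : LinearIndependent k (monoH k n q kapC kapL))
    (hC : ∀ i j l, i ≠ j → kapL i j l ≠ 0 → ∀ m, q i m * q j m = q l m) (i j m : Fin n) :
    q m i * ombil k n kapC (ev k n i) (kapL j m)
      + q i j * ombil k n kapC (ev k n j) (kapL m i)
      + q j m * ombil k n kapC (ev k n m) (kapL i j) = 0 := by
  simp only [ombil_ev]
  exact epsilon_compatibility (κ := fun i j => (kapL i j, kapC i j))
    (linearIndependent_one_gen h_pbw) qComm_gen hq_diag hq_inv hC i j m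

end PBW

/-- Let `G = 1` and let `H_{q,κ}` be a quantum Drinfeld orbifold
algebra such that the structure-constant condition holds and such that both sides
of PBW condition (3) vanish for all triples.  Set `[vᵢ,vⱼ] = κ^L(vᵢ,vⱼ)` and
`ω(vᵢ,vⱼ) = κ^C(vᵢ,vⱼ)`.  Then `ω` satisfies the ε-compatibility condition:
`q_{ki} ω(vᵢ,[vⱼ,vₖ]) + q_{ij} ω(vⱼ,[vₖ,vᵢ]) + q_{jk} ω(vₖ,[vᵢ,vⱼ]) = 0`
for all `i, j, k`. -/
theorem omega_compatibility_of_qdoa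
    (k : Type*) [Field k] [CharZero k] (n : ℕ)
    (q : Fin n → Fin n → k)
    (kapC : Fin n → Fin n → k) (kapL : Fin n → Fin n → Fin n → k)
    (hq_diag : ∀ i, q i i = 1)
    (hq_inv : ∀ i j, q i j * q j i = 1)
    (hkapC_antisym : ∀ i j, kapC i j = -(q i j) * kapC j i)
    (hkapL_antisym : ∀ i j, kapL i j = -(q i j) • kapL j i)
    (h_pbw : LinearIndependent k (monoH k n q kapC kapL) ∧
      Submodule.span k (Set.range (monoH k n q kapC kapL)) = ⊤)
    (hC : ∀ i j l, i ≠ j → kapL i j l ≠ 0 → ∀ m, q i m * q j m = q l m)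
    (h_lhs3 : ∀ i j m : Fin n, i ≠ j → i ≠ m → j ≠ m →
      (q i j * q i m) • bil k n kapL (kapL j m) (ev k n i)
        - bil k n kapL (ev k n i) (kapL j m)
        + (q i m * q j m) • bil k n kapL (kapL m i) (ev k n j)
        - (q i j * q i m) • bil k n kapL (ev k n j) (kapL m i)
        + bil k n kapL (kapL i j) (ev k n m)
        - (q i m * q j m) • bil k n kapL (ev k n m) (kapL i j) = 0)
    (h_rhs3 : ∀ i j m : Fin n, i ≠ j → i ≠ m → j ≠ m →
      (kapC j m * (1 - q i j * q i m)) • ev k n i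
        + (kapC m i * (q i j * q i m - q i m * q j m)) • ev k n j
        + (kapC i j * (q i m * q j m - 1)) • ev k n m = (0 : Fin n → k)) :
    ∀ i j m : Fin n,
      q m i * ombil k n kapC (ev k n i) (kapL j m)
        + q i j * ombil k n kapC (ev k n j) (kapL m i)
        + q j m * ombil k n kapC (ev k n m) (kapL i j) = 0 := by
  exact omega_compatibility_of_qdoa_general hq_diag hq_inv h_pbw.1 hC

end QDOA11
end
end
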